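/- arXiv:0907.0477 — 5 statements merged into one kernel-verified Lean document; each statement's English description precedes it below -/
import Mathlib

section
/- Let G = (V,E) be a finite simple graph with edge weights λ: E → [0,1] and node weights μ: V → [0,1], and let i ∈ V have neighbors j1, j2, …, jd with d = deg(i) ≥ 2. Construct G' = (V',E') with V' = (V \ {i}) ∪ {i1,i2} and E' consisting of: all edges of E not incident to i, the edge {i1,i2}, the edges {i1,j1} and {i1,j2}, and the edges {i2,jk} for k = 3,…,d. Let φ: E → E' be the injection fixing edges not incident to i and sending {i,j1} ↦ {i1,j1}, {i,j2} ↦ {i1,j2}, and {i,jk} ↦ {i2,jk} for k ≥ 3. Define λ'(φ(e)) = λ(e) for e ∈ E, λ'({i1,i2}) = 1, μ'(v) = μ(v) for v ∈ V \ {i}, and μ'(i1) = μ'(i2) = μ(i)^{-1} − √(μ(i)^{-2} − 1) if μ(i) > 0, and μ'(i1) = μ'(i2) = 0 if μ(i) = 0. Then the pushforward of the subgraphs-world distribution π_subs on G' (with parameters λ', μ') under the map x' ↦ x'∘φ equals the subgraphs-world distribution π_subs on G (with parameters λ, μ). -/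
/-- The degree of the vertex `v` under the configuration `x` (viewed as the
set of edges with value 1): the number of edges of `x` incident to `v`. -/
def degU1 {V : Type*} [DecidableEq V] (x : Finset (Sym2 V)) (v : V) : ℕ :=
  (x.filter (fun e => v ∈ e)).card

/-- The subgraphs-world weight of a configuration `x`:
`(∏_{e ∈ x} λ(e)) · (∏_{v : deg_x(v) odd} μ(v))`. -/
def wSubs1 {V : Type*} [Fintype V] [DecidableEq V]
    (lam : Sym2 V → ℝ) (mu : V → ℝ) (x : Finset (Sym2 V)) : ℝ :=
  (∏ e ∈ x, lam e) *
    ∏ v ∈ Finset.univ.filter (fun v => Odd (degU1 x v)), mu v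

section NodeSplitting

variable {V : Type*} {i : V}

/-- The projection from the split vertex set that merges the two copies of `i`. -/
def mergeCopies (i : V) : {v : V // v ≠ i} ⊕ Bool → V :=
  Sum.elim Subtype.val (fun _ => i)

/-- The edge joining the two copies of the split vertex. -/
def splitEdge (i : V) : Sym2 ({v : V // v ≠ i} ⊕ Bool) :=
  s(Sum.inr false, Sum.inr true)

lemma inl_mem_iff_mem_map_mergeCopies (e : Sym2 ({v : V // v ≠ i} ⊕ Bool))
    (v : {v : V // v ≠ i}) : Sum.inl v ∈ e ↔ (v : V) ∈ e.map (mergeCopies i) := by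
  rw [Sym2.mem_map]
  constructor
  · exact fun h => ⟨_, h, rfl⟩
  · rintro ⟨a | b, ha, hav⟩
    · rwa [← Subtype.ext (show (a : V) = v from hav)]
    · exact absurd hav.symm v.2

lemma inr_mem_or_iff_mem_map_mergeCopies (e : Sym2 ({v : V // v ≠ i} ⊕ Bool)) :
    (Sum.inr false ∈ e ∨ Sum.inr true ∈ e) ↔ i ∈ e.map (mergeCopies i) := by
  rw [Sym2.mem_map]
  constructor
  · rintro (h | h)
    · exact ⟨_, h, rfl⟩
    · exact ⟨_, h, rfl⟩
  · rintro ⟨a | b, ha, hav⟩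
    · exact absurd hav a.2
    · cases b
      · exact Or.inl ha
      · exact Or.inr ha

lemma map_mergeCopies_splitEdge_isDiag :
    ((splitEdge i).map (mergeCopies i)).IsDiag := by
  simp [splitEdge, mergeCopies]

lemma not_inr_mem_and_of_not_isDiag {e : Sym2 ({v : V // v ≠ i} ⊕ Bool)}
    (he : ¬ (e.map (mergeCopies i)).IsDiag) :
    ¬ (Sum.inr false ∈ e ∧ Sum.inr true ∈ e) := by
  intro h
  rw [Sym2.mem_and_mem_iff (by simp)] at h
  exact he (h ▸ map_mergeCopies_splitEdge_isDiag)

variable {φ : Sym2 V → Sym2 ({v : V // v ≠ i} ⊕ Bool)} {x : Finset (Sym2 V)}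

lemma injOn_of_map_mergeCopies (hφ : ∀ e ∈ x, (φ e).map (mergeCopies i) = e) :
    Set.InjOn φ x := by
  intro e he f hf hef
  rw [← hφ e he, ← hφ f hf, hef]

variable [DecidableEq V]

lemma splitEdge_notMem_image (hx : ∀ e ∈ x, ¬ e.IsDiag)
    (hφ : ∀ e ∈ x, (φ e).map (mergeCopies i) = e) : splitEdge i ∉ x.image φ := by
  rw [Finset.mem_image]
  rintro ⟨e, he, h⟩
  apply hx e he
  rw [← hφ e he, h]
  exact map_mergeCopies_splitEdge_isDiag

lemma degU1_image (hφ : ∀ e ∈ x, (φ e).map (mergeCopies i) = e)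
    (u : {v : V // v ≠ i} ⊕ Bool) :
    degU1 (x.image φ) u = (x.filter (fun e => u ∈ φ e)).card := by
  rw [degU1, Finset.filter_image, Finset.card_image_of_injOn]
  exact (injOn_of_map_mergeCopies hφ).mono (Finset.coe_subset.2 (Finset.filter_subset _ _))

lemma degU1_image_inl (hφ : ∀ e ∈ x, (φ e).map (mergeCopies i) = e)
    (v : {v : V // v ≠ i}) : degU1 (x.image φ) (Sum.inl v) = degU1 x (v : V) := by
  rw [degU1_image hφ, degU1]
  congr 1
  refine Finset.filter_congr fun e he => ?_
  rw [inl_mem_iff_mem_map_mergeCopies, hφ e he]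

lemma degU1_image_inr_add (hx : ∀ e ∈ x, ¬ e.IsDiag)
    (hφ : ∀ e ∈ x, (φ e).map (mergeCopies i) = e) :
    degU1 (x.image φ) (Sum.inr false) + degU1 (x.image φ) (Sum.inr true) = degU1 x i := by
  rw [degU1_image hφ, degU1_image hφ, degU1, ← Finset.card_union_of_disjoint, ← Finset.filter_or]
  · congr 1
    refine Finset.filter_congr fun e he => ?_
    rw [inr_mem_or_iff_mem_map_mergeCopies, hφ e he]
  · rw [Finset.disjoint_filter]
    intro e he h h'
    exact not_inr_mem_and_of_not_isDiag ((hφ e he).symm ▸ hx e he) ⟨h, h'⟩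

lemma degU1_insert {W : Type*} [DecidableEq W] {y : Finset (Sym2 W)} {f : Sym2 W} (hf : f ∉ y)
    (w : W) : degU1 (insert f y) w = degU1 y w + if w ∈ f then 1 else 0 := by
  unfold degU1
  rw [Finset.filter_insert]
  split_ifs with h
  · rw [Finset.card_insert_of_notMem (by simp [hf])]
  · rfl

lemma wSubs1_sum_bool [Fintype V] (lam : Sym2 ({v : V // v ≠ i} ⊕ Bool) → ℝ)
    (mu : {v : V // v ≠ i} ⊕ Bool → ℝ) (y : Finset (Sym2 ({v : V // v ≠ i} ⊕ Bool))) :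
    wSubs1 lam mu y = (∏ e ∈ y, lam e) *
      ((∏ v : {v : V // v ≠ i},
          if Odd (degU1 y (Sum.inl v)) then mu (Sum.inl v) else 1) *
        ((if Odd (degU1 y (Sum.inr false)) then mu (Sum.inr false) else 1) *
          if Odd (degU1 y (Sum.inr true)) then mu (Sum.inr true) else 1)) := by
  rw [wSubs1, Finset.prod_filter, Fintype.prod_sum_type, Fintype.prod_bool, mul_comm (ite _ _ _)]

lemma wSubs1_eq_mul_subtype_ne [Fintype V] (lam : Sym2 V → ℝ) (mu : V → ℝ) (i : V)
    (y : Finset (Sym2 V)) :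
    wSubs1 lam mu y = (∏ e ∈ y, lam e) *
      ((∏ v : {v : V // v ≠ i}, if Odd (degU1 y (v : V)) then mu v else 1) *
        if Odd (degU1 y i) then mu i else 1) := by
  rw [wSubs1, Finset.prod_filter, Fintype.prod_eq_mul_prod_subtype_ne _ i,
    mul_comm (ite _ _ _)]

/-- Summing over the state of the edge between the two copies of a vertex of weight `m`
reproduces the weight of the merged vertex up to a constant factor. -/
lemma parity_weights_add {m t : ℝ} (ht : 2 * t = m * (1 + t ^ 2)) (a b : ℕ) :
    ((if Odd a then t else 1) * if Odd b then t else 1) +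
        ((if Odd (a + 1) then t else 1) * if Odd (b + 1) then t else 1) =
      (1 + t ^ 2) * if Odd (a + b) then m else 1 := by
  by_cases ha : Odd a <;> by_cases hb : Odd b <;>
    simp [ha, hb, Nat.odd_add_one, Nat.odd_add'] <;> grind

lemma two_mul_split_weight {m : ℝ} (hm : m ∈ Set.Icc (0 : ℝ) 1) {t : ℝ}
    (ht : t = if 0 < m then m⁻¹ - Real.sqrt (m⁻¹ ^ 2 - 1) else 0) :
    2 * t = m * (1 + t ^ 2) := by
  split_ifs at ht with h
  · have hinv : 1 ≤ m⁻¹ := (one_le_inv₀ h).2 hm.2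
    have hsq := Real.sq_sqrt (show 0 ≤ m⁻¹ ^ 2 - 1 by nlinarith)
    have hmm : m * m⁻¹ = 1 := mul_inv_cancel₀ h.ne'
    have hquad : 1 + t ^ 2 = 2 * m⁻¹ * t := by
      rw [ht]
      linear_combination hsq
    rw [hquad]
    linear_combination -2 * t * hmm
  · have : m = 0 := le_antisymm (not_lt.1 h) hm.1
    simp [ht, this]

lemma wSubs1_image_add_insert_splitEdge [Fintype V]
    (hx : ∀ e ∈ x, ¬ e.IsDiag) (hφ : ∀ e ∈ x, (φ e).map (mergeCopies i) = e)
    {lam : Sym2 V → ℝ} {mu : V → ℝ} {lam' : Sym2 ({v : V // v ≠ i} ⊕ Bool) → ℝ}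
    {mu' : {v : V // v ≠ i} ⊕ Bool → ℝ} {t : ℝ}
    (hlam : ∀ e ∈ x, lam' (φ e) = lam e) (hlam' : lam' (splitEdge i) = 1)
    (hmu : ∀ v : {v : V // v ≠ i}, mu' (Sum.inl v) = mu v) (hmu' : ∀ b, mu' (Sum.inr b) = t)
    (ht : 2 * t = mu i * (1 + t ^ 2)) :
    wSubs1 lam' mu' (x.image φ) + wSubs1 lam' mu' (insert (splitEdge i) (x.image φ)) =
      (1 + t ^ 2) * wSubs1 lam mu x := by
  have hnot := splitEdge_notMem_image hx hφ
  have hprod : ∏ e ∈ x.image φ, lam' e = ∏ e ∈ x, lam e := by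
    rw [Finset.prod_image (injOn_of_map_mergeCopies hφ)]
    exact Finset.prod_congr rfl hlam
  have hinl (v : {v : V // v ≠ i}) : Sum.inl v ∉ splitEdge i := by simp [splitEdge]
  have hinr (b : Bool) : Sum.inr b ∈ splitEdge i := by cases b <;> simp [splitEdge]
  rw [wSubs1_sum_bool, wSubs1_sum_bool, wSubs1_eq_mul_subtype_ne lam mu i,
    Finset.prod_insert hnot, hlam', hprod, ← degU1_image_inr_add hx hφ]
  simp only [degU1_insert hnot, hinl, hinr, if_true, if_false, add_zero,
    degU1_image_inl hφ, hmu, hmu']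
  have key := parity_weights_add ht (degU1 (x.image φ) (Sum.inr false))
    (degU1 (x.image φ) (Sum.inr true))
  rw [one_mul, ← mul_add, ← mul_add, key]
  ring

lemma filter_powerset_restrict_eq {E : Finset (Sym2 V)} (hE : ∀ e ∈ E, ¬ e.IsDiag)
    (hφ : ∀ e ∈ E, (φ e).map (mergeCopies i) = e) (hxE : x ⊆ E) :
    (E.image φ ∪ {splitEdge i}).powerset.filter (fun y => E.filter (fun e => φ e ∈ y) = x) =
      {x.image φ, insert (splitEdge i) (x.image φ)} := by
  have hnot := splitEdge_notMem_image hE hφ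
  have hinj := injOn_of_map_mergeCopies hφ
  have hmem (e) (he : e ∈ E) : φ e ∈ x.image φ ↔ e ∈ x := by
    rw [Finset.mem_image]
    exact ⟨fun ⟨f, hf, h⟩ => hinj (hxE hf) he h ▸ hf, fun h => ⟨e, h, rfl⟩⟩
  have hne (e) (he : e ∈ E) : φ e ≠ splitEdge i := fun h =>
    hnot (h ▸ Finset.mem_image_of_mem φ he)
  ext y
  simp only [Finset.mem_filter, Finset.mem_powerset, Finset.mem_insert, Finset.mem_singleton]
  constructor
  · rintro ⟨hy, rfl⟩
    have himg : (E.filter (fun e => φ e ∈ y)).image φ = y.erase (splitEdge i) := by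
      ext f
      simp only [Finset.mem_image, Finset.mem_filter, Finset.mem_erase]
      constructor
      · rintro ⟨e, ⟨he, hey⟩, rfl⟩
        exact ⟨hne e he, hey⟩
      · rintro ⟨hf, hfy⟩
        have := hy hfy
        simp only [Finset.mem_union, Finset.mem_image, Finset.mem_singleton, hf, or_false] at this
        obtain ⟨e, he, rfl⟩ := this
        exact ⟨e, ⟨he, hfy⟩, rfl⟩
    rw [himg]
    by_cases h : splitEdge i ∈ y
    · exact Or.inr (Finset.insert_erase h).symm
    · exact Or.inl (Finset.erase_eq_of_notMem h).symm
  · rintro (rfl | rfl)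
    · refine ⟨(Finset.image_subset_image hxE).trans Finset.subset_union_left, ?_⟩
      ext e
      simp only [Finset.mem_filter]
      exact ⟨fun h => (hmem e h.1).1 h.2, fun h => ⟨hxE h, (hmem e (hxE h)).2 h⟩⟩
    · refine ⟨Finset.insert_subset (by simp)
        ((Finset.image_subset_image hxE).trans Finset.subset_union_left), ?_⟩
      ext e
      simp only [Finset.mem_filter, Finset.mem_insert]
      exact ⟨fun h => (hmem e h.1).1 (h.2.resolve_left (hne e h.1)),
        fun h => ⟨hxE h, Or.inr ((hmem e (hxE h)).2 h)⟩⟩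

end NodeSplitting

/-- Splitting a node `i` of degree `d ≥ 2` into two nodes
`i1, i2` (modeled as `Sum.inr false`, `Sum.inr true` in the new vertex type
`{v // v ≠ i} ⊕ Bool`), joined by an edge of weight 1, with the first two
neighbors `nbr 0, nbr 1` attached to `i1` and the rest to `i2`, and with
`μ'(i1) = μ'(i2) = μ(i)⁻¹ − √(μ(i)⁻² − 1)` when `μ(i) > 0` (and `0` when
`μ(i) = 0`), preserves the subgraphs-world distribution: the pushforward of
`π_subs` on `G'` under `x' ↦ x' ∘ φ` equals `π_subs` on `G`. -/
theorem stmt1 {V : Type*} [Fintype V] [DecidableEq V]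
    (E : Finset (Sym2 V)) (hE : ∀ e ∈ E, ¬ e.IsDiag)
    (lam : Sym2 V → ℝ) (mu : V → ℝ)
    (hlam : ∀ e ∈ E, lam e ∈ Set.Icc (0 : ℝ) 1)
    (hmu : ∀ v : V, mu v ∈ Set.Icc (0 : ℝ) 1)
    (i : V) (d : ℕ) (hd : 2 ≤ d)
    (nbr : Fin d → V) (hinj : Function.Injective nbr)
    (hnbr : ∀ j : V, s(i, j) ∈ E ↔ ∃ k : Fin d, nbr k = j)
    (hdeg : (E.filter (fun e => i ∈ e)).card = d)
    -- the embedding of the surviving vertices into the new vertex type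
    (g : V → {v : V // v ≠ i} ⊕ Bool)
    (hg : ∀ (v : V) (h : v ≠ i), g v = Sum.inl ⟨v, h⟩)
    -- the edge correspondence φ
    (φ : Sym2 V → Sym2 ({v : V // v ≠ i} ⊕ Bool))
    (hφ1 : ∀ e ∈ E, i ∉ e → φ e = e.map g)
    (hφ2 : ∀ k : Fin d, (k : ℕ) < 2 →
      φ s(i, nbr k) = s(Sum.inr false, g (nbr k)))
    (hφ3 : ∀ k : Fin d, 2 ≤ (k : ℕ) →
      φ s(i, nbr k) = s(Sum.inr true, g (nbr k)))
    -- the new edge set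
    (E' : Finset (Sym2 ({v : V // v ≠ i} ⊕ Bool)))
    (hE' : E' = E.image φ ∪ {s(Sum.inr false, Sum.inr true)})
    -- the new edge weights
    (lam' : Sym2 ({v : V // v ≠ i} ⊕ Bool) → ℝ)
    (hlam'1 : ∀ e ∈ E, lam' (φ e) = lam e)
    (hlam'2 : lam' s(Sum.inr false, Sum.inr true) = 1)
    -- the new node weights
    (mu' : {v : V // v ≠ i} ⊕ Bool → ℝ)
    (hmu'1 : ∀ (v : V) (h : v ≠ i), mu' (Sum.inl ⟨v, h⟩) = mu v)
    (hmu'2 : ∀ b : Bool, mu' (Sum.inr b) =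
      if 0 < mu i then (mu i)⁻¹ - Real.sqrt (((mu i)⁻¹) ^ 2 - 1) else 0) :
    ∀ x ∈ E.powerset,
      (∑ x' ∈ E'.powerset.filter
            (fun x' => E.filter (fun e => φ e ∈ x') = x),
          wSubs1 lam' mu' x') /
        (∑ y' ∈ E'.powerset, wSubs1 lam' mu' y')
      = wSubs1 lam mu x / (∑ y ∈ E.powerset, wSubs1 lam mu y) := by
  have hmerge (v : V) (hv : v ≠ i) : mergeCopies i (g v) = v := by
    rw [hg v hv]
    rfl
  have hφ : ∀ e ∈ E, (φ e).map (mergeCopies i) = e := by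
    intro e he
    by_cases hi : i ∈ e
    · obtain ⟨j, rfl⟩ := Sym2.mem_iff_exists.1 hi
      obtain ⟨k, rfl⟩ := (hnbr j).1 he
      have hk : nbr k ≠ i := fun h => hE _ he (by simp [h])
      rcases lt_or_ge (k : ℕ) 2 with h | h
      · rw [hφ2 k h, Sym2.map_mk, hmerge _ hk]
        rfl
      · rw [hφ3 k h, Sym2.map_mk, hmerge _ hk]
        rfl
    · rw [hφ1 e he hi, Sym2.map_map]
      calc e.map (mergeCopies i ∘ g) = e.map id :=
            Sym2.map_congr fun v hv => hmerge v fun h => hi (h ▸ hv)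
        _ = e := by rw [Sym2.map_id, id]
  obtain ⟨t, htdef⟩ : ∃ t, t = if 0 < mu i then
    (mu i)⁻¹ - Real.sqrt (((mu i)⁻¹) ^ 2 - 1) else 0 := ⟨_, rfl⟩
  have ht := two_mul_split_weight (hmu i) htdef
  have hfiber : ∀ x ∈ E.powerset,
      ∑ x' ∈ E'.powerset.filter (fun x' => E.filter (fun e => φ e ∈ x') = x),
        wSubs1 lam' mu' x' = (1 + t ^ 2) * wSubs1 lam mu x := by
    intro x hx
    have hxE := Finset.mem_powerset.1 hx
    have hxφ := fun e he => hφ e (hxE he)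
    have hxD := fun e he => hE e (hxE he)
    rw [hE', ← splitEdge, filter_powerset_restrict_eq hE hφ hxE, Finset.sum_pair,
      wSubs1_image_add_insert_splitEdge hxD hxφ (fun e he => hlam'1 e (hxE he)) hlam'2
        (fun v => hmu'1 v v.2) (fun b => (hmu'2 b).trans htdef.symm) ht]
    exact fun h => splitEdge_notMem_image hxD hxφ (h ▸ Finset.mem_insert_self _ _)
  have htotal : ∑ y' ∈ E'.powerset, wSubs1 lam' mu' y' =
      (1 + t ^ 2) * ∑ y ∈ E.powerset, wSubs1 lam mu y := by
    rw [Finset.mul_sum, ← Finset.sum_congr rfl hfiber]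
    exact (Finset.sum_fiberwise_of_maps_to
      (fun y _ => Finset.mem_powerset.2 (Finset.filter_subset _ _)) _).symm
  intro x hx
  rw [hfiber x hx, htotal, mul_div_mul_left _ _ (by positivity)]
end

section
/- Let G = (V,E) be a finite simple graph with edge weights λ: E → [0,1] and node weights μ: V → [0,1], and let i ∈ V have degree exactly 1 with unique incident edge {i,j}. Assume μ(j) + λ({i,j})μ(i) > 0. Let G' = (V',E') with V' = V \ {i} and E' = E \ {{i,j}}; set λ'(e) = λ(e) for e ∈ E', μ'(v) = μ(v) for v ∈ V' \ {j}, and μ'(j) = (μ(j) + λ({i,j})μ(i)) / (1 + λ({i,j})μ(i)μ(j)). Draw X' ∼ π_subs on G' with parameters (λ',μ'); set X(e) = X'(e) for all e ∈ E', and, conditionally on X', set X({i,j}) ∼ Bernoulli(δ) where δ = δ1 = λ({i,j})μ(i)/(μ(j) + λ({i,j})μ(i)) if the degree of j under X' is odd, and δ = δ2 = λ({i,j})μ(i)μ(j)/(1 + λ({i,j})μ(i)μ(j)) if the degree of j under X' is even. Then X ∼ π_subs on G with parameters (λ,μ). -/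
/-- The degree of the vertex `v` under the configuration `x`. -/
def degU4 {V : Type*} [DecidableEq V] (x : Finset (Sym2 V)) (v : V) : ℕ :=
  (x.filter (fun e => v ∈ e)).card

/-- The subgraphs-world weight of a configuration `x`. -/
def wSubs4 {V : Type*} [Fintype V] [DecidableEq V]
    (lam : Sym2 V → ℝ) (mu : V → ℝ) (x : Finset (Sym2 V)) : ℝ :=
  (∏ e ∈ x, lam e) *
    ∏ v ∈ Finset.univ.filter (fun v => Odd (degU4 x v)), mu v

/-- The factor of the subgraphs-world weight that does not involve the nodes `i` and `j`. -/
noncomputable def coreWeight {V : Type*} [Fintype V] [DecidableEq V]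
    (lam : Sym2 V → ℝ) (mu : V → ℝ) (i j : V) (y : Finset (Sym2 V)) : ℝ :=
  (∏ e ∈ y, lam e) *
    ∏ v ∈ (Finset.univ.erase i).erase j, if Odd (degU4 y v) then mu v else 1

theorem wSubs4_eq_core_mul {V : Type*} [Fintype V] [DecidableEq V]
    (lam : Sym2 V → ℝ) (mu : V → ℝ) {i j : V} (hij : i ≠ j) (y : Finset (Sym2 V)) :
    wSubs4 lam mu y = coreWeight lam mu i j y *
      ((if Odd (degU4 y i) then mu i else 1) * (if Odd (degU4 y j) then mu j else 1)) := by
  have hj : j ∈ Finset.univ.erase i := by simp [hij.symm]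
  rw [wSubs4, coreWeight, Finset.prod_filter, ← Finset.mul_prod_erase _ _ (Finset.mem_univ i),
    ← Finset.mul_prod_erase _ _ hj]
  ring

theorem degU4_insert_of_mem {V : Type*} [DecidableEq V] {y : Finset (Sym2 V)} {e : Sym2 V}
    (he : e ∉ y) {v : V} (hv : v ∈ e) : degU4 (insert e y) v = degU4 y v + 1 := by
  rw [degU4, degU4, Finset.filter_insert, if_pos hv, Finset.card_insert_of_notMem]
  simp [he]

theorem degU4_insert_of_notMem {V : Type*} [DecidableEq V] (y : Finset (Sym2 V)) {e : Sym2 V}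
    {v : V} (hv : v ∉ e) : degU4 (insert e y) v = degU4 y v := by
  rw [degU4, degU4, Finset.filter_insert, if_neg hv]

theorem coreWeight_insert {V : Type*} [Fintype V] [DecidableEq V]
    (lam : Sym2 V → ℝ) (mu : V → ℝ) {i j : V} {y : Finset (Sym2 V)} (he : s(i, j) ∉ y) :
    coreWeight lam mu i j (insert s(i, j) y) = lam s(i, j) * coreWeight lam mu i j y := by
  rw [coreWeight, coreWeight, Finset.prod_insert he, mul_assoc]
  congr 2
  refine Finset.prod_congr rfl fun v hv => ?_
  rw [degU4_insert_of_notMem]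
  simp only [Finset.mem_erase, Finset.mem_univ, and_true] at hv
  simp [hv.1, hv.2]

theorem coreWeight_congr {V : Type*} [Fintype V] [DecidableEq V]
    (lam : Sym2 V → ℝ) {mu mu' : V → ℝ} {i j : V}
    (h : ∀ v, v ≠ i → v ≠ j → mu' v = mu v) (y : Finset (Sym2 V)) :
    coreWeight lam mu' i j y = coreWeight lam mu i j y := by
  rw [coreWeight, coreWeight]
  congr 1
  refine Finset.prod_congr rfl fun v hv => ?_
  simp only [Finset.mem_erase, Finset.mem_univ, and_true] at hv
  rw [h v hv.2 hv.1]

/-- A configuration avoiding the node `i`. -/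
theorem wSubs4_of_degU4_eq_zero {V : Type*} [Fintype V] [DecidableEq V]
    (lam : Sym2 V → ℝ) (mu : V → ℝ) {i j : V} (hij : i ≠ j) {y : Finset (Sym2 V)}
    (hy : degU4 y i = 0) :
    wSubs4 lam mu y = coreWeight lam mu i j y * (if Odd (degU4 y j) then mu j else 1) := by
  simp [wSubs4_eq_core_mul lam mu hij, hy]

/-- Adding the edge `{i, j}` to a configuration avoiding the node `i`. -/
theorem wSubs4_insert_of_degU4_eq_zero {V : Type*} [Fintype V] [DecidableEq V]
    (lam : Sym2 V → ℝ) (mu : V → ℝ) {i j : V} (hij : i ≠ j) {y : Finset (Sym2 V)}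
    (hy : degU4 y i = 0) (he : s(i, j) ∉ y) :
    wSubs4 lam mu (insert s(i, j) y) = lam s(i, j) * coreWeight lam mu i j y *
      (mu i * (if Odd (degU4 y j) then 1 else mu j)) := by
  rw [wSubs4_eq_core_mul lam mu hij, coreWeight_insert lam mu he,
    degU4_insert_of_mem he (Sym2.mem_mk_left i j), degU4_insert_of_mem he (Sym2.mem_mk_right i j),
    hy]
  by_cases h : Odd (degU4 y j) <;> simp [h, Nat.odd_add_one]

/-- Removing a degree-1 node `i` with unique incident edge
`{i,j}`.  On `G' = (V \ {i}, E \ {{i,j}})` set `μ'(j) = (μ(j)+λ({i,j})μ(i)) /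
(1+λ({i,j})μ(i)μ(j))` and keep all other weights.  Draw `X' ∼ π_subs` on `G'`
and extend it to `X` on `G` by turning the edge `{i,j}` on with probability
`δ₁ = λμ(i)/(μ(j)+λμ(i))` if `deg_{X'}(j)` is odd, and with probability
`δ₂ = λμ(i)μ(j)/(1+λμ(i)μ(j))` if it is even.  Then `X ∼ π_subs` on `G`:
for every configuration `x ⊆ E`, the probability of producing `x`
(namely `π'_subs(x \ {{i,j}})` times the appropriate Bernoulli factor)
equals `π_subs(x)`. -/
theorem stmt4 {V : Type*} [Fintype V] [DecidableEq V]
    (E : Finset (Sym2 V)) (hE : ∀ e ∈ E, ¬ e.IsDiag)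
    (lam : Sym2 V → ℝ) (mu : V → ℝ)
    (hlam : ∀ e ∈ E, lam e ∈ Set.Icc (0 : ℝ) 1)
    (hmu : ∀ v : V, mu v ∈ Set.Icc (0 : ℝ) 1)
    (i j : V) (hij : i ≠ j) (he : s(i, j) ∈ E)
    (hdeg1 : (E.filter (fun e => i ∈ e)).card = 1)
    (hpos : 0 < mu j + lam s(i, j) * mu i)
    -- the reduced edge set
    (E' : Finset (Sym2 V)) (hE' : E' = E.erase s(i, j))
    -- the new node weights
    (mu' : V → ℝ)
    (hmu'1 : ∀ v : V, v ≠ i → v ≠ j → mu' v = mu v)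
    (hmu'2 : mu' j =
      (mu j + lam s(i, j) * mu i) / (1 + lam s(i, j) * mu i * mu j))
    -- the Bernoulli parameters
    (δ₁ δ₂ : ℝ)
    (hδ₁ : δ₁ = lam s(i, j) * mu i / (mu j + lam s(i, j) * mu i))
    (hδ₂ : δ₂ = lam s(i, j) * mu i * mu j / (1 + lam s(i, j) * mu i * mu j)) :
    ∀ x ∈ E.powerset,
      (wSubs4 lam mu' (x.erase s(i, j)) /
          (∑ y' ∈ E'.powerset, wSubs4 lam mu' y')) *
        (if s(i, j) ∈ x
          then (if Odd (degU4 (x.erase s(i, j)) j) then δ₁ else δ₂)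
          else 1 - (if Odd (degU4 (x.erase s(i, j)) j) then δ₁ else δ₂))
      = wSubs4 lam mu x / (∑ y ∈ E.powerset, wSubs4 lam mu y) := by
  have hc : 0 < 1 + lam s(i, j) * mu i * mu j := by
    have := mul_nonneg (mul_nonneg (hlam _ he).1 (hmu i).1) (hmu j).1
    linarith
  set c := 1 + lam s(i, j) * mu i * mu j with hcdef
  have hnot : s(i, j) ∉ E' := by simp [hE']
  have hEins : E = insert s(i, j) E' := by rw [hE', Finset.insert_erase he]
  have hdeg : ∀ y ⊆ E', degU4 y i = 0 := by
    intro y hy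
    have h := degU4_insert_of_mem hnot (Sym2.mem_mk_left i j)
    rw [← hEins, degU4, hdeg1] at h
    have hle : degU4 y i ≤ degU4 E' i := Finset.card_le_card (Finset.filter_subset_filter _ hy)
    omega
  have hoff : ∀ y ⊆ E', c * wSubs4 lam mu' y *
      (1 - if Odd (degU4 y j) then δ₁ else δ₂) = wSubs4 lam mu y := by
    intro y hy
    rw [wSubs4_of_degU4_eq_zero lam mu' hij (hdeg y hy),
      wSubs4_of_degU4_eq_zero lam mu hij (hdeg y hy), coreWeight_congr lam hmu'1]
    split_ifs
    · rw [hmu'2, hδ₁]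
      field_simp
      ring
    · rw [hδ₂]
      field_simp
      rw [hcdef]
      ring
  have hon : ∀ y ⊆ E', c * wSubs4 lam mu' y *
      (if Odd (degU4 y j) then δ₁ else δ₂) = wSubs4 lam mu (insert s(i, j) y) := by
    intro y hy
    rw [wSubs4_of_degU4_eq_zero lam mu' hij (hdeg y hy),
      wSubs4_insert_of_degU4_eq_zero lam mu hij (hdeg y hy) (fun h => hnot (hy h)),
      coreWeight_congr lam hmu'1]
    split_ifs
    · rw [hmu'2, hδ₁]
      field_simp
    · rw [hδ₂]
      field_simp
  have hZ : ∑ y ∈ E.powerset, wSubs4 lam mu y = c * ∑ y ∈ E'.powerset, wSubs4 lam mu' y := by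
    rw [hEins, Finset.sum_powerset_insert hnot, ← Finset.sum_add_distrib, Finset.mul_sum]
    refine Finset.sum_congr rfl fun y hy => ?_
    rw [← hoff y (Finset.mem_powerset.1 hy), ← hon y (Finset.mem_powerset.1 hy)]
    ring
  intro x hx
  have hx' : x.erase s(i, j) ⊆ E' := hE' ▸ Finset.erase_subset_erase _ (Finset.mem_powerset.1 hx)
  have hw : wSubs4 lam mu x = c * (wSubs4 lam mu' (x.erase s(i, j)) *
      (if s(i, j) ∈ x
        then (if Odd (degU4 (x.erase s(i, j)) j) then δ₁ else δ₂)
        else 1 - (if Odd (degU4 (x.erase s(i, j)) j) then δ₁ else δ₂))) := by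
    by_cases h : s(i, j) ∈ x
    · rw [if_pos h, ← mul_assoc, hon _ hx', Finset.insert_erase h]
    · rw [if_neg h, ← mul_assoc, hoff _ hx', Finset.erase_eq_of_notMem h]
  rw [hZ, hw, mul_div_mul_left _ _ hc.ne', div_mul_eq_mul_div]
end

section
/- Let G = (V,E) be a finite simple graph with edge weights λ: E → [0,1] and node weights μ: V → [0,1], and let i ∈ V have degree exactly 2 with incident edges {i,j} and {i,k}. Construct G' = (V',E') with V' = (V \ {i}) ∪ {i',i''} and E' = (E \ {{i,j},{i,k}}) ∪ {{i',j},{i'',j},{i',k},{i'',k},{i',i''}}. Let λ1, λ2, μ1 ∈ [0,1] satisfy 2λ1/(1+λ1²) = λ({i,j}), 2λ2/(1+λ2²) = λ({i,k}), and 2μ1/(1+μ1²) = μ(i). Define λ'({i',j}) = λ'({i'',j}) = λ1, λ'({i',k}) = λ'({i'',k}) = λ2, λ'({i',i''}) = 1, μ'(i') = μ'(i'') = μ1, and let λ', μ' agree with λ, μ on all other edges and nodes. Draw X' ∼ π_subs on G' with parameters (λ',μ'), and define X ∈ {0,1}^E by X(e) = X'(e) for e ∈ E \ {{i,j},{i,k}},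 X({i,j}) = (X'({i',j}) + X'({i'',j})) mod 2, and X({i,k}) = (X'({i',k}) + X'({i'',k})) mod 2. Then X ∼ π_subs on G with parameters (λ,μ). -/
/-- The degree of the vertex `v` under the configuration `x`. -/
def degU5 {V : Type*} [DecidableEq V] (x : Finset (Sym2 V)) (v : V) : ℕ :=
  (x.filter (fun e => v ∈ e)).card

/-- The subgraphs-world weight of a configuration `x`. -/
def wSubs5 {V : Type*} [Fintype V] [DecidableEq V]
    (lam : Sym2 V → ℝ) (mu : V → ℝ) (x : Finset (Sym2 V)) : ℝ :=
  (∏ e ∈ x, lam e) *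
    ∏ v ∈ Finset.univ.filter (fun v => Odd (degU5 x v)), mu v

section Clone

variable {V : Type*} {i : V} {g : V → {v : V // v ≠ i} ⊕ Bool}

theorem sym2Map_injOn_notMem (hg : ∀ (v : V) (h : v ≠ i), g v = Sum.inl ⟨v, h⟩) :
    Set.InjOn (Sym2.map g) {e | i ∉ e} := by
  have key : ∀ e : Sym2 V, i ∉ e →
      Sym2.map (Sum.elim Subtype.val fun _ => i) (Sym2.map g e) = e := by
    intro e he
    rw [Sym2.map_map]
    refine (Sym2.map_congr (g := id) fun v hv => ?_).trans (by rw [Sym2.map_id, id])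
    have hvi : v ≠ i := fun h => he (h ▸ hv)
    simp [hg v hvi]
  intro e he f hf h
  rw [← key e he, h, key f hf]

theorem inl_mem_sym2Map_iff (hg : ∀ (v : V) (h : v ≠ i), g v = Sum.inl ⟨v, h⟩)
    {e : Sym2 V} (he : i ∉ e) (v : {v : V // v ≠ i}) :
    Sum.inl v ∈ Sym2.map g e ↔ (v : V) ∈ e := by
  rw [Sym2.mem_map]
  constructor
  · rintro ⟨a, ha, h⟩
    have hai : a ≠ i := fun h => he (h ▸ ha)
    rw [hg a hai] at h
    obtain rfl := Sum.inl_injective h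
    exact ha
  · exact fun h => ⟨v, h, hg v v.2⟩

theorem inr_notMem_sym2Map (hg : ∀ (v : V) (h : v ≠ i), g v = Sum.inl ⟨v, h⟩)
    {e : Sym2 V} (he : i ∉ e) (b : Bool) : Sum.inr b ∉ Sym2.map g e := by
  rw [Sym2.mem_map]
  rintro ⟨a, ha, h⟩
  have hai : a ≠ i := fun h => he (h ▸ ha)
  simp [hg a hai] at h

variable [DecidableEq V]

/-- The configuration on the cloned graph that consists of the image of `x` together with those
of the five new edges selected by the bits `p`. -/
def cloneConfig (g : V → {v : V // v ≠ i} ⊕ Bool) (j k : V) (x : Finset (Sym2 V))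
    (p : (Bool × Bool) × (Bool × Bool) × Bool) : Finset (Sym2 ({v : V // v ≠ i} ⊕ Bool)) :=
  x.image (Sym2.map g) ∪
    ((if p.1.1 then {s(Sum.inr false, g j)} else ∅) ∪
    ((if p.1.2 then {s(Sum.inr true, g j)} else ∅) ∪
    ((if p.2.1.1 then {s(Sum.inr false, g k)} else ∅) ∪
    ((if p.2.1.2 then {s(Sum.inr true, g k)} else ∅) ∪
    (if p.2.2 then {s(Sum.inr false, Sum.inr true)} else ∅)))))

/-- The configuration on the original graph induced by the configuration `x'` on the cloned
graph. -/
def cloneProj (E : Finset (Sym2 V)) (g : V → {v : V // v ≠ i} ⊕ Bool) (j k : V)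
    (x' : Finset (Sym2 ({v : V // v ≠ i} ⊕ Bool))) : Finset (Sym2 V) :=
  (E.filter (fun e => i ∉ e ∧ Sym2.map g e ∈ x')) ∪
    (if (s(Sum.inr false, g j) ∈ x') ↔ (s(Sum.inr true, g j) ∈ x')
      then (∅ : Finset (Sym2 V)) else {s(i, j)}) ∪
    (if (s(Sum.inr false, g k) ∈ x') ↔ (s(Sum.inr true, g k) ∈ x')
      then (∅ : Finset (Sym2 V)) else {s(i, k)})

/-- The bits recording which of the five new edges belong to `x'`. -/
def cloneBits (g : V → {v : V // v ≠ i} ⊕ Bool) (j k : V)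
    (x' : Finset (Sym2 ({v : V // v ≠ i} ⊕ Bool))) : (Bool × Bool) × (Bool × Bool) × Bool :=
  ((decide (s(Sum.inr false, g j) ∈ x'), decide (s(Sum.inr true, g j) ∈ x')),
    (decide (s(Sum.inr false, g k) ∈ x'), decide (s(Sum.inr true, g k) ∈ x')),
    decide (s(Sum.inr false, Sum.inr true) ∈ x'))

theorem mk_inr_notMem_image (hg : ∀ (v : V) (h : v ≠ i), g v = Sum.inl ⟨v, h⟩)
    {x : Finset (Sym2 V)} (hx : ∀ e ∈ x, i ∉ e) (b : Bool) (w : {v : V // v ≠ i} ⊕ Bool) :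
    s(Sum.inr b, w) ∉ x.image (Sym2.map g) := by
  intro h
  obtain ⟨e, he, h⟩ := Finset.mem_image.1 h
  exact inr_notMem_sym2Map hg (hx e he) b (h ▸ Sym2.mem_mk_left _ _)

theorem sym2Map_mem_cloneConfig (hg : ∀ (v : V) (h : v ≠ i), g v = Sum.inl ⟨v, h⟩)
    {j k : V} {x : Finset (Sym2 V)} (hx : ∀ e ∈ x, i ∉ e)
    (p : (Bool × Bool) × (Bool × Bool) × Bool) {e : Sym2 V} (he : i ∉ e) :
    Sym2.map g e ∈ cloneConfig g j k x p ↔ e ∈ x := by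
  have hne : ∀ b w, Sym2.map g e ≠ s(Sum.inr b, w) := fun b w h =>
    inr_notMem_sym2Map hg he b (h ▸ Sym2.mem_mk_left _ _)
  have himg : Sym2.map g e ∈ x.image (Sym2.map g) ↔ e ∈ x := by
    refine ⟨fun h => ?_, Finset.mem_image_of_mem _⟩
    obtain ⟨f, hf, h⟩ := Finset.mem_image.1 h
    rwa [← sym2Map_injOn_notMem hg (hx f hf) he h]
  rw [cloneConfig, Finset.mem_union, himg]
  simp only [Finset.mem_union, or_iff_left_iff_imp]
  intro h
  exfalso
  split_ifs at h <;> simp [hne] at h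

theorem cloneBits_cloneConfig (hg : ∀ (v : V) (h : v ≠ i), g v = Sum.inl ⟨v, h⟩)
    {j k : V} (hjk : j ≠ k) (hij : i ≠ j) (hik : i ≠ k)
    {x : Finset (Sym2 V)} (hx : ∀ e ∈ x, i ∉ e) (p : (Bool × Bool) × (Bool × Bool) × Bool) :
    cloneBits g j k (cloneConfig g j k x p) = p := by
  have himg := mk_inr_notMem_image hg hx
  obtain ⟨⟨a, a'⟩, ⟨b, b'⟩, c⟩ := p
  simp only [cloneBits, cloneConfig, Finset.mem_union, himg, false_or]
  rw [hg j hij.symm, hg k hik.symm]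
  cases a <;> cases a' <;> cases b <;> cases b' <;> cases c <;> simp [hjk, hjk.symm]

@[to_additive]
theorem prod_cloneConfig {M : Type*} [CommMonoid M]
    (hg : ∀ (v : V) (h : v ≠ i), g v = Sum.inl ⟨v, h⟩)
    {j k : V} (hjk : j ≠ k) (hij : i ≠ j) (hik : i ≠ k)
    {x : Finset (Sym2 V)} (hx : ∀ e ∈ x, i ∉ e) (p : (Bool × Bool) × (Bool × Bool) × Bool)
    (f : Sym2 ({v : V // v ≠ i} ⊕ Bool) → M) :
    ∏ e ∈ cloneConfig g j k x p, f e = (∏ e ∈ x, f (Sym2.map g e)) *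
      ((if p.1.1 then f s(Sum.inr false, g j) else 1) *
      ((if p.1.2 then f s(Sum.inr true, g j) else 1) *
      ((if p.2.1.1 then f s(Sum.inr false, g k) else 1) *
      ((if p.2.1.2 then f s(Sum.inr true, g k) else 1) *
      (if p.2.2 then f s(Sum.inr false, Sum.inr true) else 1))))) := by
  have himg := mk_inr_notMem_image hg hx
  obtain ⟨⟨a, a'⟩, ⟨b, b'⟩, c⟩ := p
  rw [cloneConfig, Finset.prod_union, Finset.prod_image]
  · have hsingle : ∀ (t : Bool) (e : Sym2 ({v : V // v ≠ i} ⊕ Bool)),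
        ∏ e' ∈ (if t then {e} else ∅), f e' = if t then f e else 1 := by
      intro t e
      cases t <;> simp
    congr 1
    rw [hg j hij.symm, hg k hik.symm, Finset.prod_union, Finset.prod_union, Finset.prod_union,
      Finset.prod_union]
    · simp only [hsingle]
    all_goals
      cases a <;> cases a' <;> cases b <;> cases b' <;> cases c <;> simp [hjk]
  · exact fun e he f hf h => sym2Map_injOn_notMem hg (hx e he) (hx f hf) h
  · rw [Finset.disjoint_right]
    intro e he
    simp only [Finset.mem_union] at he
    rcases he with he | he | he | he | he <;> split_ifs at he <;> simp at he <;>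
      subst he <;> exact himg _ _

@[to_additive]
theorem prod_split_two_edges {M : Type*} [CommMonoid M]
    {j k : V} (hjk : j ≠ k) {x : Finset (Sym2 V)}
    (hx : ∀ e ∈ x, i ∈ e → e = s(i, j) ∨ e = s(i, k)) (f : Sym2 V → M) :
    ∏ e ∈ x, f e = (∏ e ∈ x.filter (fun e => i ∉ e), f e) *
      ((if s(i, j) ∈ x then f s(i, j) else 1) * (if s(i, k) ∈ x then f s(i, k) else 1)) := by
  have hne : s(i, j) ≠ s(i, k) := by rwa [Ne, Sym2.congr_right]
  rw [← Finset.prod_filter_mul_prod_filter_not x (fun e => i ∉ e)]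
  congr 1
  have : x.filter (fun e => ¬ i ∉ e) =
      (({s(i, j), s(i, k)} : Finset (Sym2 V)).filter (· ∈ x)) := by
    ext e
    simp only [Finset.mem_filter, Finset.mem_insert, Finset.mem_singleton, not_not]
    constructor
    · exact fun h => ⟨hx e h.1 h.2, h.1⟩
    · rintro ⟨rfl | rfl, h⟩ <;> simp [h]
  rw [this, Finset.prod_filter, Finset.prod_pair hne]

theorem degU5_eq_sum (x : Finset (Sym2 V)) (v : V) :
    degU5 x v = ∑ e ∈ x, if v ∈ e then 1 else 0 := by
  rw [degU5, Finset.card_filter]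

theorem degU5_cloneConfig_inr (hg : ∀ (v : V) (h : v ≠ i), g v = Sum.inl ⟨v, h⟩)
    {j k : V} (hjk : j ≠ k) (hij : i ≠ j) (hik : i ≠ k)
    {x : Finset (Sym2 V)} (hx : ∀ e ∈ x, i ∉ e) (p : (Bool × Bool) × (Bool × Bool) × Bool)
    (t : Bool) :
    degU5 (cloneConfig g j k x p) (Sum.inr t) =
      (if t then p.1.2 else p.1.1).toNat + (if t then p.2.1.2 else p.2.1.1).toNat
        + p.2.2.toNat := by
  rw [degU5_eq_sum, sum_cloneConfig hg hjk hij hik hx,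
    Finset.sum_eq_zero fun e he => if_neg (inr_notMem_sym2Map hg (hx e he) t)]
  obtain ⟨⟨a, a'⟩, ⟨b, b'⟩, c⟩ := p
  rw [hg j hij.symm, hg k hik.symm]
  cases t <;> cases a <;> cases a' <;> cases b <;> cases b' <;> cases c <;> simp

theorem odd_degU5_cloneConfig_inl (hg : ∀ (v : V) (h : v ≠ i), g v = Sum.inl ⟨v, h⟩)
    {j k : V} (hjk : j ≠ k) (hij : i ≠ j) (hik : i ≠ k)
    {x : Finset (Sym2 V)} (hx : ∀ e ∈ x, i ∈ e → e = s(i, j) ∨ e = s(i, k))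
    (p : (Bool × Bool) × (Bool × Bool) × Bool)
    (hpj : (p.1.1 ^^ p.1.2) = decide (s(i, j) ∈ x))
    (hpk : (p.2.1.1 ^^ p.2.1.2) = decide (s(i, k) ∈ x)) (v : {v : V // v ≠ i}) :
    Odd (degU5 (cloneConfig g j k (x.filter (fun e => i ∉ e)) p) (Sum.inl v)) ↔
      Odd (degU5 x v) := by
  have hx0 : ∀ e ∈ x.filter (fun e => i ∉ e), i ∉ e := fun e he => (Finset.mem_filter.1 he).2
  rw [degU5_eq_sum, sum_cloneConfig hg hjk hij hik hx0, degU5_eq_sum,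
    sum_split_two_edges hjk hx,
    Finset.sum_congr rfl fun e he =>
      if_congr (inl_mem_sym2Map_iff hg (hx0 e he) v) (Eq.refl 1) (Eq.refl 0)]
  generalize ∑ e ∈ x.filter (fun e => i ∉ e), (if (v : V) ∈ e then 1 else 0) = d
  have hvj : (Sum.inl v : {v : V // v ≠ i} ⊕ Bool) = g j ↔ (v : V) = j := by
    simp [hg j hij.symm, Subtype.ext_iff]
  have hvk : (Sum.inl v : {v : V // v ≠ i} ⊕ Bool) = g k ↔ (v : V) = k := by
    simp [hg k hik.symm, Subtype.ext_iff]
  obtain ⟨⟨a, a'⟩, ⟨b, b'⟩, c⟩ := p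
  simp only [Sym2.mem_iff, hvj, hvk, v.2, false_or, reduceCtorEq, or_self, if_false, ite_self]
  simp only at hpj hpk
  have hJ : s(i, j) ∈ x ↔ (a ^^ a') = true := by rw [hpj, decide_eq_true_iff]
  have hK : s(i, k) ∈ x ↔ (b ^^ b') = true := by rw [hpk, decide_eq_true_iff]
  simp only [hJ, hK]
  by_cases h1 : (v : V) = j <;> by_cases h2 : (v : V) = k <;> simp only [h1, h2, if_true, if_false]
  all_goals
    cases a <;> cases a' <;> cases b <;> cases b' <;>
      simp [Nat.odd_iff] <;> omega

theorem degU5_center {j k : V} (hjk : j ≠ k) {x : Finset (Sym2 V)}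
    (hx : ∀ e ∈ x, i ∈ e → e = s(i, j) ∨ e = s(i, k)) :
    degU5 x i = (decide (s(i, j) ∈ x)).toNat + (decide (s(i, k) ∈ x)).toNat := by
  rw [degU5_eq_sum, sum_split_two_edges hjk hx,
    Finset.sum_eq_zero fun e he => if_neg (Finset.mem_filter.1 he).2]
  by_cases h1 : s(i, j) ∈ x <;> by_cases h2 : s(i, k) ∈ x <;> simp [h1, h2]

theorem wSubs5_eq_prod_ite [Fintype V] (lam : Sym2 V → ℝ) (mu : V → ℝ) (x : Finset (Sym2 V)) :
    wSubs5 lam mu x = (∏ e ∈ x, lam e) * ∏ v, if Odd (degU5 x v) then mu v else 1 := by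
  rw [wSubs5, Finset.prod_filter]

theorem cloneProj_eq_iff {E : Finset (Sym2 V)} {j k : V} (hjk : j ≠ k)
    (hE : ∀ e ∈ E, i ∈ e → e = s(i, j) ∨ e = s(i, k)) {x : Finset (Sym2 V)} (hxE : x ⊆ E)
    (x' : Finset (Sym2 ({v : V // v ≠ i} ⊕ Bool))) :
    cloneProj E g j k x' = x ↔
      (∀ e ∈ E, i ∉ e → (Sym2.map g e ∈ x' ↔ e ∈ x)) ∧
      ((cloneBits g j k x').1.1 ^^ (cloneBits g j k x').1.2) = decide (s(i, j) ∈ x) ∧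
      ((cloneBits g j k x').2.1.1 ^^ (cloneBits g j k x').2.1.2) = decide (s(i, k) ∈ x) := by
  have hne : s(i, j) ≠ s(i, k) := by rwa [Ne, Sym2.congr_right]
  have hmem : ∀ e, e ∈ cloneProj E g j k x' ↔ (e ∈ E ∧ i ∉ e ∧ Sym2.map g e ∈ x') ∨
      (e = s(i, j) ∧ ((cloneBits g j k x').1.1 ^^ (cloneBits g j k x').1.2) = true) ∨
      (e = s(i, k) ∧ ((cloneBits g j k x').2.1.1 ^^ (cloneBits g j k x').2.1.2) = true) := by
    intro e
    simp only [cloneProj, cloneBits, Finset.mem_union, Finset.mem_filter, or_assoc]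
    refine or_congr Iff.rfl (or_congr ?_ ?_) <;> split_ifs with h <;> simp [h]
  generalize ((cloneBits g j k x').1.1 ^^ (cloneBits g j k x').1.2) = α at *
  generalize ((cloneBits g j k x').2.1.1 ^^ (cloneBits g j k x').2.1.2) = β at *
  rw [Finset.ext_iff]
  simp only [hmem]
  constructor
  · intro h
    refine ⟨fun e he hie => ?_, ?_, ?_⟩
    · rw [← h e]
      have h1 : e ≠ s(i, j) := fun h => hie (h ▸ Sym2.mem_mk_left _ _)
      have h2 : e ≠ s(i, k) := fun h => hie (h ▸ Sym2.mem_mk_left _ _)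
      simp [he, hie, h1, h2]
    · have := h s(i, j)
      simp only [Sym2.mem_mk_left, not_true_eq_false, false_and, and_false, hne, false_or,
        or_false, true_and] at this
      simp [← this]
    · have := h s(i, k)
      simp only [Sym2.mem_mk_left, not_true_eq_false, false_and, and_false, hne.symm, false_or,
        true_and] at this
      simp [← this]
  · rintro ⟨h, rfl, rfl⟩ e
    by_cases hie : i ∈ e
    · by_cases he : e = s(i, j)
      · simp only [he, Sym2.mem_mk_left, hne]
        simp
      by_cases he2 : e = s(i, k)
      · simp only [he2, Sym2.mem_mk_left, hne.symm]
        simp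
      have : e ∉ x := fun hex => (hE e (hxE hex) hie).elim he he2
      simp [hie, he, he2, this]
    · have h1 : e ≠ s(i, j) := fun h => hie (h ▸ Sym2.mem_mk_left _ _)
      have h2 : e ≠ s(i, k) := fun h => hie (h ▸ Sym2.mem_mk_left _ _)
      simp only [hie, h1, h2, false_and, or_false, not_false_eq_true, true_and]
      exact ⟨fun h' => (h e h'.1 hie).1 h'.2, fun h' => ⟨hxE h', (h e (hxE h') hie).2 h'⟩⟩

theorem filter_notMem_subset_sdiff {E x : Finset (Sym2 V)} (hxE : x ⊆ E) (j k : V) :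
    x.filter (fun e => i ∉ e) ⊆ E \ {s(i, j), s(i, k)} := by
  intro e he
  obtain ⟨he, hie⟩ := Finset.mem_filter.1 he
  have h1 : e ≠ s(i, j) := fun h => hie (h ▸ Sym2.mem_mk_left _ _)
  have h2 : e ≠ s(i, k) := fun h => hie (h ▸ Sym2.mem_mk_left _ _)
  simp [hxE he, h1, h2]

theorem cloneConfig_subset {E : Finset (Sym2 V)} {j k : V} {x : Finset (Sym2 V)}
    (hx : x ⊆ E \ {s(i, j), s(i, k)}) (p : (Bool × Bool) × (Bool × Bool) × Bool) :
    cloneConfig g j k x p ⊆ (E \ {s(i, j), s(i, k)}).image (Sym2.map g) ∪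
      {s(Sum.inr false, g j), s(Sum.inr true, g j),
       s(Sum.inr false, g k), s(Sum.inr true, g k),
       s(Sum.inr false, Sum.inr true)} := by
  refine Finset.union_subset_union (Finset.image_subset_image hx) fun e he => ?_
  simp only [Finset.mem_union] at he
  rcases he with he | he | he | he | he <;> split_ifs at he <;> simp at he <;> simp [he]

theorem cloneConfig_cloneBits (hg : ∀ (v : V) (h : v ≠ i), g v = Sum.inl ⟨v, h⟩)
    {E : Finset (Sym2 V)} {j k : V} (hjk : j ≠ k) (hij : i ≠ j) (hik : i ≠ k)
    (hE : ∀ e ∈ E, i ∈ e → e = s(i, j) ∨ e = s(i, k)) {x : Finset (Sym2 V)} (hxE : x ⊆ E)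
    {x' : Finset (Sym2 ({v : V // v ≠ i} ⊕ Bool))}
    (hx' : x' ⊆ (E \ {s(i, j), s(i, k)}).image (Sym2.map g) ∪
      {s(Sum.inr false, g j), s(Sum.inr true, g j),
       s(Sum.inr false, g k), s(Sum.inr true, g k),
       s(Sum.inr false, Sum.inr true)})
    (h : ∀ e ∈ E, i ∉ e → (Sym2.map g e ∈ x' ↔ e ∈ x)) :
    cloneConfig g j k (x.filter (fun e => i ∉ e)) (cloneBits g j k x') = x' := by
  have hx0 : ∀ e ∈ x.filter (fun e => i ∉ e), i ∉ e := fun e he => (Finset.mem_filter.1 he).2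
  have hbits := cloneBits_cloneConfig hg hjk hij hik hx0 (cloneBits g j k x')
  rw [cloneBits, cloneBits] at hbits
  simp only [Prod.mk.injEq, decide_eq_decide] at hbits
  obtain ⟨⟨h1, h2⟩, ⟨h3, h4⟩, h5⟩ := hbits
  have key : ∀ e ∈ (E \ {s(i, j), s(i, k)}).image (Sym2.map g) ∪
      {s(Sum.inr false, g j), s(Sum.inr true, g j),
       s(Sum.inr false, g k), s(Sum.inr true, g k),
       s(Sum.inr false, Sum.inr true)},
      e ∈ cloneConfig g j k (x.filter (fun e => i ∉ e)) (cloneBits g j k x') ↔ e ∈ x' := by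
    intro e he
    simp only [Finset.mem_union, Finset.mem_insert, Finset.mem_singleton, Finset.mem_image,
      Finset.mem_sdiff] at he
    rcases he with ⟨f, ⟨hf, hf'⟩, rfl⟩ | rfl | rfl | rfl | rfl | rfl
    · have hif : i ∉ f := fun hif => hf' (hE f hf hif)
      rw [sym2Map_mem_cloneConfig hg hx0 _ hif, h f hf hif]
      simp [hif]
    · exact h1
    · exact h2
    · exact h3
    · exact h4
    · exact h5
  ext e
  by_cases he : e ∈ (E \ {s(i, j), s(i, k)}).image (Sym2.map g) ∪
      {s(Sum.inr false, g j), s(Sum.inr true, g j),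
       s(Sum.inr false, g k), s(Sum.inr true, g k),
       s(Sum.inr false, Sum.inr true)}
  · exact key e he
  · exact iff_of_false (fun h => he (cloneConfig_subset (filter_notMem_subset_sdiff hxE j k) _ h)) fun h => he (hx' h)

/-- The weight contributed by the five new edges and the two new nodes. -/
noncomputable def cloneWeight (l1 l2 m : ℝ) (p : (Bool × Bool) × (Bool × Bool) × Bool) : ℝ :=
  ((if p.1.1 then l1 else 1) * ((if p.1.2 then l1 else 1) *
    ((if p.2.1.1 then l2 else 1) * (if p.2.1.2 then l2 else 1)))) *
  ((if Odd (p.1.2.toNat + p.2.1.2.toNat + p.2.2.toNat) then m else 1) *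
    (if Odd (p.1.1.toNat + p.2.1.1.toNat + p.2.2.toNat) then m else 1))

theorem sum_cloneWeight (l1 l2 m : ℝ) (α β : Bool) :
    ∑ p with (p.1.1 ^^ p.1.2) = α ∧ (p.2.1.1 ^^ p.2.1.2) = β, cloneWeight l1 l2 m p =
      ((1 + l1 ^ 2) * (1 + l2 ^ 2) * (1 + m ^ 2)) *
        ((if α then 2 * l1 / (1 + l1 ^ 2) else 1) * (if β then 2 * l2 / (1 + l2 ^ 2) else 1) *
          (if Odd (α.toNat + β.toNat) then 2 * m / (1 + m ^ 2) else 1)) := by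
  have h1 : 1 + l1 ^ 2 ≠ 0 := by positivity
  have h2 : 1 + l2 ^ 2 ≠ 0 := by positivity
  have h3 : 1 + m ^ 2 ≠ 0 := by positivity
  rw [Finset.sum_filter]
  cases α <;> cases β <;>
    simp [Fintype.sum_prod_type, cloneWeight, Nat.odd_iff] <;> field_simp <;> ring

theorem wSubs5_cloneConfig [Fintype V] (hg : ∀ (v : V) (h : v ≠ i), g v = Sum.inl ⟨v, h⟩)
    {j k : V} (hjk : j ≠ k) (hij : i ≠ j) (hik : i ≠ k)
    {x : Finset (Sym2 V)} (hx : ∀ e ∈ x, i ∈ e → e = s(i, j) ∨ e = s(i, k))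
    {lam : Sym2 V → ℝ} {mu : V → ℝ} {l1 l2 m : ℝ}
    {lam' : Sym2 ({v : V // v ≠ i} ⊕ Bool) → ℝ}
    (hlam0 : ∀ e ∈ x, i ∉ e → lam' (Sym2.map g e) = lam e)
    (hlamj : lam' s(Sum.inr false, g j) = l1 ∧ lam' s(Sum.inr true, g j) = l1)
    (hlamk : lam' s(Sum.inr false, g k) = l2 ∧ lam' s(Sum.inr true, g k) = l2)
    (hlamc : lam' s(Sum.inr false, Sum.inr true) = 1)
    {mu' : {v : V // v ≠ i} ⊕ Bool → ℝ}
    (hmu1 : ∀ (v : V) (h : v ≠ i), mu' (Sum.inl ⟨v, h⟩) = mu v)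
    (hmu2 : ∀ b : Bool, mu' (Sum.inr b) = m)
    (p : (Bool × Bool) × (Bool × Bool) × Bool)
    (hpj : (p.1.1 ^^ p.1.2) = decide (s(i, j) ∈ x))
    (hpk : (p.2.1.1 ^^ p.2.1.2) = decide (s(i, k) ∈ x)) :
    wSubs5 lam' mu' (cloneConfig g j k (x.filter (fun e => i ∉ e)) p) =
      ((∏ e ∈ x.filter (fun e => i ∉ e), lam e) *
        ∏ v : {v : V // v ≠ i}, if Odd (degU5 x v) then mu v else 1) *
      cloneWeight l1 l2 m p := by
  have hx0 : ∀ e ∈ x.filter (fun e => i ∉ e), i ∉ e := fun e he => (Finset.mem_filter.1 he).2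
  have hinl : ∀ v : {v : V // v ≠ i}, (if Odd (degU5 (cloneConfig g j k
      (x.filter (fun e => i ∉ e)) p) (Sum.inl v)) then mu' (Sum.inl v) else 1) =
      if Odd (degU5 x v) then mu v else 1 := fun v =>
    if_congr (odd_degU5_cloneConfig_inl hg hjk hij hik hx p hpj hpk v) (hmu1 v v.2) rfl
  rw [wSubs5_eq_prod_ite, prod_cloneConfig hg hjk hij hik hx0, Fintype.prod_sum_type,
    Fintype.prod_congr _ _ hinl, Fintype.prod_bool,
    Finset.prod_congr rfl fun e he => hlam0 e (Finset.mem_filter.1 he).1 (hx0 e he)]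
  simp only [degU5_cloneConfig_inr hg hjk hij hik hx0, hlamj, hlamk, hlamc, hmu2, cloneWeight,
    ite_self, if_true, Bool.false_eq_true, if_false, mul_one]
  ring

theorem wSubs5_split_center [Fintype V] {j k : V} (hjk : j ≠ k)
    {x : Finset (Sym2 V)} (hx : ∀ e ∈ x, i ∈ e → e = s(i, j) ∨ e = s(i, k))
    (lam : Sym2 V → ℝ) (mu : V → ℝ) :
    wSubs5 lam mu x =
      ((∏ e ∈ x.filter (fun e => i ∉ e), lam e) *
        ∏ v : {v : V // v ≠ i}, if Odd (degU5 x v) then mu v else 1) *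
      ((if s(i, j) ∈ x then lam s(i, j) else 1) * (if s(i, k) ∈ x then lam s(i, k) else 1) *
        (if Odd ((decide (s(i, j) ∈ x)).toNat + (decide (s(i, k) ∈ x)).toNat)
          then mu i else 1)) := by
  rw [wSubs5_eq_prod_ite, prod_split_two_edges hjk hx, Fintype.prod_eq_mul_prod_subtype_ne _ i,
    degU5_center hjk hx]
  ring

end Clone

/-- Cloning a degree-2 node `i` with incident edges `{i,j}` and
`{i,k}`: replace `i` by two nodes `i', i''` (modeled as `Sum.inr false`,
`Sum.inr true` in `{v // v ≠ i} ⊕ Bool`) joined by an edge of weight 1,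
each joined to `j` with weight `λ1` and to `k` with weight `λ2`, where
`2λ1/(1+λ1²) = λ({i,j})`, `2λ2/(1+λ2²) = λ({i,k})`, `2μ1/(1+μ1²) = μ(i)`
and `μ'(i') = μ'(i'') = μ1`.  Drawing `X' ∼ π_subs` on `G'` and setting
`X(e) = X'(e)` off `i`, `X({i,j}) = X'({i',j}) + X'({i'',j}) mod 2`,
`X({i,k}) = X'({i',k}) + X'({i'',k}) mod 2` yields `X ∼ π_subs` on `G`. -/
theorem stmt5 {V : Type*} [Fintype V] [DecidableEq V]
    (E : Finset (Sym2 V)) (hE : ∀ e ∈ E, ¬ e.IsDiag)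
    (lam : Sym2 V → ℝ) (mu : V → ℝ)
    (hlam : ∀ e ∈ E, lam e ∈ Set.Icc (0 : ℝ) 1)
    (hmu : ∀ v : V, mu v ∈ Set.Icc (0 : ℝ) 1)
    (i j k : V) (hjk : j ≠ k) (hij : i ≠ j) (hik : i ≠ k)
    (hej : s(i, j) ∈ E) (hek : s(i, k) ∈ E)
    (hdeg2 : (E.filter (fun e => i ∈ e)).card = 2)
    -- the solutions of the weight equations
    (l1 l2 m1 : ℝ)
    (hl1 : l1 ∈ Set.Icc (0 : ℝ) 1) (hl2 : l2 ∈ Set.Icc (0 : ℝ) 1)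
    (hm1 : m1 ∈ Set.Icc (0 : ℝ) 1)
    (heq1 : 2 * l1 / (1 + l1 ^ 2) = lam s(i, j))
    (heq2 : 2 * l2 / (1 + l2 ^ 2) = lam s(i, k))
    (heq3 : 2 * m1 / (1 + m1 ^ 2) = mu i)
    -- the embedding of the surviving vertices into the new vertex type
    (g : V → {v : V // v ≠ i} ⊕ Bool)
    (hg : ∀ (v : V) (h : v ≠ i), g v = Sum.inl ⟨v, h⟩)
    -- the new edge set
    (E' : Finset (Sym2 ({v : V // v ≠ i} ⊕ Bool)))
    (hE' : E' = (E \ {s(i, j), s(i, k)}).image (Sym2.map g) ∪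
      {s(Sum.inr false, g j), s(Sum.inr true, g j),
       s(Sum.inr false, g k), s(Sum.inr true, g k),
       s(Sum.inr false, Sum.inr true)})
    -- the new edge weights
    (lam' : Sym2 ({v : V // v ≠ i} ⊕ Bool) → ℝ)
    (hlam'0 : ∀ e ∈ E, i ∉ e → lam' (Sym2.map g e) = lam e)
    (hlam'j : lam' s(Sum.inr false, g j) = l1 ∧ lam' s(Sum.inr true, g j) = l1)
    (hlam'k : lam' s(Sum.inr false, g k) = l2 ∧ lam' s(Sum.inr true, g k) = l2)
    (hlam'c : lam' s(Sum.inr false, Sum.inr true) = 1)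
    -- the new node weights
    (mu' : {v : V // v ≠ i} ⊕ Bool → ℝ)
    (hmu'1 : ∀ (v : V) (h : v ≠ i), mu' (Sum.inl ⟨v, h⟩) = mu v)
    (hmu'2 : ∀ b : Bool, mu' (Sum.inr b) = m1) :
    ∀ x ∈ E.powerset,
      (∑ x' ∈ E'.powerset.filter (fun x' =>
            (E.filter (fun e => i ∉ e ∧ Sym2.map g e ∈ x')) ∪
              (if (s(Sum.inr false, g j) ∈ x') ↔ (s(Sum.inr true, g j) ∈ x')
                then (∅ : Finset (Sym2 V)) else {s(i, j)}) ∪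
              (if (s(Sum.inr false, g k) ∈ x') ↔ (s(Sum.inr true, g k) ∈ x')
                then (∅ : Finset (Sym2 V)) else {s(i, k)}) = x),
          wSubs5 lam' mu' x') /
        (∑ y' ∈ E'.powerset, wSubs5 lam' mu' y')
      = wSubs5 lam mu x / (∑ y ∈ E.powerset, wSubs5 lam mu y) := by
  subst hE'
  have hEi : ∀ e ∈ E, i ∈ e → e = s(i, j) ∨ e = s(i, k) := by
    have hsub : ({s(i, j), s(i, k)} : Finset (Sym2 V)) ⊆ E.filter (fun e => i ∈ e) := by
      intro e he
      rcases Finset.mem_insert.1 he with rfl | he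
      · simp [hej]
      · rw [Finset.mem_singleton.1 he]
        simp [hek]
    have hne : s(i, j) ≠ s(i, k) := by rwa [Ne, Sym2.congr_right]
    have heq := Finset.eq_of_subset_of_card_le hsub (by rw [hdeg2, Finset.card_pair hne])
    intro e he hie
    have : e ∈ E.filter (fun e => i ∈ e) := Finset.mem_filter.2 ⟨he, hie⟩
    rw [← heq] at this
    simpa using this
  set E' := (E \ {s(i, j), s(i, k)}).image (Sym2.map g) ∪
      {s(Sum.inr false, g j), s(Sum.inr true, g j),
       s(Sum.inr false, g k), s(Sum.inr true, g k),
       s(Sum.inr false, Sum.inr true)}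
  have hC : (1 + l1 ^ 2) * (1 + l2 ^ 2) * (1 + m1 ^ 2) ≠ 0 := by positivity
  have hfib : ∀ x ∈ E.powerset,
      ∑ x' ∈ E'.powerset.filter (fun x' => cloneProj E g j k x' = x), wSubs5 lam' mu' x' =
        ((1 + l1 ^ 2) * (1 + l2 ^ 2) * (1 + m1 ^ 2)) * wSubs5 lam mu x := by
    intro x hx
    have hxE := Finset.mem_powerset.1 hx
    have hxi : ∀ e ∈ x, i ∈ e → e = s(i, j) ∨ e = s(i, k) := fun e he => hEi e (hxE he)
    have hx0 : ∀ e ∈ x.filter (fun e => i ∉ e), i ∉ e :=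
      fun e he => (Finset.mem_filter.1 he).2
    have hbij : ∑ x' ∈ E'.powerset.filter (fun x' => cloneProj E g j k x' = x),
        wSubs5 lam' mu' x' =
        ∑ p with (p.1.1 ^^ p.1.2) = decide (s(i, j) ∈ x) ∧
            (p.2.1.1 ^^ p.2.1.2) = decide (s(i, k) ∈ x),
          ((∏ e ∈ x.filter (fun e => i ∉ e), lam e) *
            ∏ v : {v : V // v ≠ i}, if Odd (degU5 x v) then mu v else 1) *
          cloneWeight l1 l2 m1 p := by
      refine Finset.sum_nbij' (cloneBits g j k)
        (cloneConfig g j k (x.filter (fun e => i ∉ e))) ?_ ?_ ?_ ?_ ?_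
      · intro x' hx'
        rw [Finset.mem_filter, cloneProj_eq_iff hjk hEi hxE] at hx'
        exact Finset.mem_filter.2 ⟨Finset.mem_univ _, hx'.2.2⟩
      · intro p hp
        rw [Finset.mem_filter, cloneProj_eq_iff hjk hEi hxE,
          cloneBits_cloneConfig hg hjk hij hik hx0, Finset.mem_powerset]
        refine ⟨cloneConfig_subset (filter_notMem_subset_sdiff hxE j k) p, fun e _ hie => ?_,
          (Finset.mem_filter.1 hp).2⟩
        rw [sym2Map_mem_cloneConfig hg hx0 _ hie]
        simp [hie]
      · intro x' hx'
        rw [Finset.mem_filter, cloneProj_eq_iff hjk hEi hxE, Finset.mem_powerset] at hx'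
        exact cloneConfig_cloneBits hg hjk hij hik hEi hxE hx'.1 hx'.2.1
      · exact fun p _ => cloneBits_cloneConfig hg hjk hij hik hx0 p
      · intro x' hx'
        rw [Finset.mem_filter, cloneProj_eq_iff hjk hEi hxE, Finset.mem_powerset] at hx'
        rw [← wSubs5_cloneConfig hg hjk hij hik hxi (fun e he => hlam'0 e (hxE he)) hlam'j hlam'k
          hlam'c hmu'1 hmu'2 _ hx'.2.2.1 hx'.2.2.2,
          cloneConfig_cloneBits hg hjk hij hik hEi hxE hx'.1 hx'.2.1]
    rw [hbij, ← Finset.mul_sum, sum_cloneWeight, wSubs5_split_center hjk hxi, heq1, heq2, heq3]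
    simp only [decide_eq_true_eq]
    ring
  have hmaps : ∀ x' ∈ E'.powerset, cloneProj E g j k x' ∈ E.powerset := by
    intro x' _
    rw [Finset.mem_powerset, cloneProj]
    refine Finset.union_subset (Finset.union_subset (Finset.filter_subset _ _) ?_) ?_ <;>
      split_ifs <;> simp [hej, hek]
  intro x hx
  rw [← Finset.sum_fiberwise_of_maps_to hmaps, Finset.sum_congr rfl hfib, ← Finset.mul_sum]
  exact (congrArg (· / _) (hfib x hx)).trans (mul_div_mul_left _ _ hC)
end

section
/- Let G = (V,E) be a finite simple graph in which every node has degree exactly 3, with edge weights λ: E → [0,1] and node weights μ identically 0. For each node i with neighbors n(i,1), n(i,2), n(i,3), set A_i = {d_i, v_{i,n(i,1)}, v_{i,n(i,2)}, v_{i,n(i,3)}} (all new vertices) and let E_i be all 2-element subsets of A_i. Let G' = (V',E') with V' = ∪_{i∈V} A_i and E' = {{v_{ij}, v_{ji}} : {i,j} ∈ E} ∪ (∪_i E_i). Define edge weights λ' on G' by λ'({v_{ij},v_{ji}}) = λ({i,j}), λ'({d_i, v_{ij}}) = 1, and λ'({v_{ij}, v_{ik}}) = 1/3 for j ≠ k.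 Let φ({i,j}) = {v_{ij},v_{ji}}. Then the pushforward of the perfect-matching distribution π_permat on G' (with weights λ') under the map x' ↦ x'∘φ ∈ {0,1}^E equals the subgraphs-world distribution π_subs on G with parameters λ and μ ≡ 0. -/
/-- The degree of the vertex `v` under the configuration `x`. -/
def degU7 {W : Type*} [DecidableEq W] (x : Finset (Sym2 W)) (v : W) : ℕ :=
  (x.filter (fun e => v ∈ e)).card

/-- The subgraphs-world weight of a configuration `x`. -/
def wSubs7 {V : Type*} [Fintype V] [DecidableEq V]
    (lam : Sym2 V → ℝ) (mu : V → ℝ) (x : Finset (Sym2 V)) : ℝ :=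
  (∏ e ∈ x, lam e) *
    ∏ v ∈ Finset.univ.filter (fun v => Odd (degU7 x v)), mu v

/-- The perfect-matching weight of a configuration `x` relative to the vertex
set `VS`: the product of its edge weights if every vertex of `VS` is incident
to exactly one edge of `x`, and `0` otherwise. -/
def wPerMat7 {W : Type*} [DecidableEq W] (VS : Finset W)
    (lam : Sym2 W → ℝ) (x : Finset (Sym2 W)) : ℝ :=
  if ∀ v ∈ VS, degU7 x v = 1 then ∏ e ∈ x, lam e else 0

/-- The edge correspondence `φ({i,j}) = {v_{ij}, v_{ji}}`, where the new
vertex `v_{ij}` is modeled as `Sum.inr (i,j) : V ⊕ V × V`. -/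
def phi7 {V : Type*} : Sym2 V → Sym2 (V ⊕ V × V) :=
  Sym2.lift ⟨fun a b => s(Sum.inr (a, b), Sum.inr (b, a)),
    fun _ _ => Sym2.eq_swap⟩

/-- The gadget vertices for the original node `i`:
`A_i = {d_i, v_{i,n(i,1)}, v_{i,n(i,2)}, v_{i,n(i,3)}}`, with `d_i`
modeled as `Sum.inl i`. -/
def gadgetVerts7 {V : Type*} [Fintype V] [DecidableEq V]
    (E : Finset (Sym2 V)) (i : V) : Finset (V ⊕ V × V) :=
  insert (Sum.inl i)
    ((Finset.univ.filter (fun j => s(i, j) ∈ E)).image (fun j => Sum.inr (i, j)))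

/-- The gadget edges `E_i`: all 2-element subsets of `A_i`. -/
def gadgetEdges7 {V : Type*} [Fintype V] [DecidableEq V]
    (E : Finset (Sym2 V)) (i : V) : Finset (Sym2 (V ⊕ V × V)) :=
  ((gadgetVerts7 E i ×ˢ gadgetVerts7 E i).filter (fun p => p.1 ≠ p.2)).image
    (fun p => s(p.1, p.2))

open Finset

section GadgetMatchings

/-- The perfect matchings of `K₄` minus the vertices among `1, 2, 3` flagged by `p, q, r`. -/
def residualMatchings : Bool → Bool → Bool → Finset (Finset (Sym2 (Fin 4)))
  | false, false, false => {{s(0, 1), s(2, 3)}, {s(0, 2), s(1, 3)}, {s(0, 3), s(1, 2)}}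
  | true, true, false => {{s(0, 3)}}
  | true, false, true => {{s(0, 2)}}
  | false, true, true => {{s(0, 1)}}
  | _, _, _ => ∅

lemma filter_powerset_residualMatchings (p q r : Bool) :
    ((univ.filter (fun e : Sym2 (Fin 4) => ¬ e.IsDiag)).powerset.filter
      (fun z => ∀ v, (![false, p, q, r] v).toNat + degU7 z v = 1)) = residualMatchings p q r := by
  revert p q r
  decide +kernel

lemma sum_residualMatchings (w : Sym2 (Fin 4) → ℝ) (p q r : Bool)
    (h1 : w s(0, 1) = 1) (h2 : w s(0, 2) = 1) (h3 : w s(0, 3) = 1)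
    (h12 : w s(1, 2) = 1 / 3) (h13 : w s(1, 3) = 1 / 3) (h23 : w s(2, 3) = 1 / 3) :
    ∑ z ∈ residualMatchings p q r, ∏ e ∈ z, w e =
      if Even (p.toNat + q.toNat + r.toNat) then 1 else 0 := by
  have a1 : ({s(0, 1), s(2, 3)} : Finset (Sym2 (Fin 4))) ∉
    ({{s(0, 2), s(1, 3)}, {s(0, 3), s(1, 2)}} : Finset (Finset (Sym2 (Fin 4)))) := by decide
  have a2 : ({s(0, 2), s(1, 3)} : Finset (Sym2 (Fin 4))) ∉
    ({{s(0, 3), s(1, 2)}} : Finset (Finset (Sym2 (Fin 4)))) := by decide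
  have b1 : (s(0, 1) : Sym2 (Fin 4)) ≠ s(2, 3) := by decide
  have b2 : (s(0, 2) : Sym2 (Fin 4)) ≠ s(1, 3) := by decide
  have b3 : (s(0, 3) : Sym2 (Fin 4)) ≠ s(1, 2) := by decide
  cases p <;> cases q <;> cases r <;> simp only [residualMatchings]
  case false.false.false =>
    rw [sum_insert a1, sum_insert a2, sum_singleton, prod_pair b1, prod_pair b2, prod_pair b3,
      h1, h2, h3, h12, h13, h23]
    norm_num
  all_goals simp [h1, h2, h3, Nat.even_iff]

end GadgetMatchings

section Transport

variable {U W : Type*} [DecidableEq W]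

lemma degU7_image_map [DecidableEq U] {f : U → W} (hf : Function.Injective f) (z : Finset (Sym2 U)) (v : U) :
    degU7 (z.image (Sym2.map f)) (f v) = degU7 z v := by
  unfold degU7
  rw [filter_image, card_image_of_injective _ (Sym2.map.injective hf)]
  congr 1
  ext e
  simp only [mem_filter, Sym2.mem_map, hf.eq_iff, exists_eq_right]

lemma degU7_union {y z : Finset (Sym2 W)} (h : Disjoint y z) (v : W) :
    degU7 (y ∪ z) v = degU7 y v + degU7 z v := by
  unfold degU7
  rw [filter_union, card_union_of_disjoint (disjoint_filter_filter h)]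

/-- A sum over the subsets of a set of edges, transported along an injection of vertices. -/
lemma sum_powerset_image_map {f : U → W} (hf : Function.Injective f) (F : Finset (Sym2 U))
    (g : Finset (Sym2 W) → ℝ) :
    ∑ y ∈ (F.image (Sym2.map f)).powerset, g y =
      ∑ z ∈ F.powerset, g (z.image (Sym2.map f)) := by
  rw [powerset_image, sum_image]
  exact fun _ _ _ _ h => image_injective (Sym2.map.injective hf) h

end Transport

section Gadget

variable {V : Type*}

@[simp]
lemma phi7_mk (a b : V) : phi7 s(a, b) = s(Sum.inr (a, b), Sum.inr (b, a)) := rfl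

lemma phi7_injective : Function.Injective (phi7 (V := V)) := by
  intro e e' h
  induction e with | _ a b =>
  induction e' with | _ c d =>
  simp only [phi7_mk, Sym2.eq_iff, Sum.inr.injEq, Prod.mk.injEq] at h ⊢
  tauto

lemma degU7_image_phi7_inl [DecidableEq V] (x : Finset (Sym2 V)) (i : V) :
    degU7 (x.image phi7) (Sum.inl i) = 0 := by
  rw [degU7, card_eq_zero, filter_eq_empty_iff]
  intro e he
  obtain ⟨e, -, rfl⟩ := mem_image.1 he
  induction e with | _ a b => simp

lemma degU7_image_phi7_inr [DecidableEq V] (x : Finset (Sym2 V)) (i j : V) :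
    degU7 (x.image phi7) (Sum.inr (i, j)) = (decide (s(i, j) ∈ x)).toNat := by
  have h : (x.image phi7).filter (fun e => Sum.inr (i, j) ∈ e) =
      if s(i, j) ∈ x then {phi7 s(i, j)} else ∅ := by
    have key : ∀ e : Sym2 V, Sum.inr (i, j) ∈ phi7 e ↔ e = s(i, j) := by
      intro e
      induction e with | _ a b =>
      simp only [phi7_mk, Sym2.mem_iff, Sum.inr.injEq, Prod.mk.injEq, Sym2.eq_iff]
      tauto
    rw [filter_image]
    simp only [key, filter_eq']
    split_ifs <;> simp
  rw [degU7, h]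
  split_ifs with hx <;> simp [hx]

/-- The node of the original graph whose gadget contains a given new vertex. -/
def gadgetOwner : V ⊕ V × V → V := Sum.elim id Prod.fst

variable [Fintype V] [DecidableEq V] {E : Finset (Sym2 V)}

lemma gadgetOwner_eq {i : V} {v : V ⊕ V × V} (h : v ∈ gadgetVerts7 E i) : gadgetOwner v = i := by
  simp only [gadgetVerts7, mem_insert, mem_image, mem_filter] at h
  rcases h with rfl | ⟨j, -, rfl⟩ <;> rfl

lemma mem_gadgetEdges7 {i : V} {e : Sym2 (V ⊕ V × V)} :
    e ∈ gadgetEdges7 E i ↔ ¬ e.IsDiag ∧ ∀ v ∈ e, v ∈ gadgetVerts7 E i := by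
  induction e with | _ a b =>
  simp only [gadgetEdges7, mem_image, mem_filter, mem_product, Prod.exists, Sym2.eq_iff,
    Sym2.mk_isDiag_iff, Sym2.mem_iff, forall_eq_or_imp, forall_eq]
  constructor
  · rintro ⟨c, d, ⟨⟨hc, hd⟩, hn⟩, ⟨rfl, rfl⟩ | ⟨rfl, rfl⟩⟩
    · exact ⟨hn, hc, hd⟩
    · exact ⟨Ne.symm hn, hd, hc⟩
  · rintro ⟨hn, ha, hb⟩
    exact ⟨a, b, ⟨⟨ha, hb⟩, hn⟩, Or.inl ⟨rfl, rfl⟩⟩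

lemma gadgetOwner_of_mem_gadgetEdges7 {i : V} {e : Sym2 (V ⊕ V × V)} (he : e ∈ gadgetEdges7 E i)
    {v : V ⊕ V × V} (hv : v ∈ e) : gadgetOwner v = i :=
  gadgetOwner_eq ((mem_gadgetEdges7.1 he).2 v hv)

lemma eq_of_mem_gadgetEdges7 {i j : V} {e : Sym2 (V ⊕ V × V)} (hi : e ∈ gadgetEdges7 E i)
    (hj : e ∈ gadgetEdges7 E j) : i = j := by
  induction e with | _ a b =>
  rw [← gadgetOwner_of_mem_gadgetEdges7 hi (Sym2.mem_mk_left a b),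
    gadgetOwner_of_mem_gadgetEdges7 hj (Sym2.mem_mk_left a b)]

lemma phi7_notMem_gadgetEdges7 {e : Sym2 V} (he : ¬ e.IsDiag) (i : V) :
    phi7 e ∉ gadgetEdges7 E i := by
  induction e with | _ a b =>
  intro h
  have ha := gadgetOwner_of_mem_gadgetEdges7 h (Sym2.mem_mk_left _ _)
  have hb := gadgetOwner_of_mem_gadgetEdges7 h (Sym2.mem_mk_right _ _)
  exact he (Sym2.mk_isDiag_iff.2 (ha.trans hb.symm))

lemma degU7_eq_card_neighbors (x : Finset (Sym2 V)) (i : V) :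
    degU7 x i = (univ.filter (fun j => s(i, j) ∈ x)).card := by
  rw [degU7, ← card_image_of_injOn (f := fun j => s(i, j))
    (fun a _ b _ h => Sym2.congr_right.1 h)]
  congr 1
  ext e
  simp only [mem_filter, mem_image, mem_univ, true_and]
  constructor
  · rintro ⟨he, j, rfl⟩
    exact ⟨j, he, rfl⟩
  · rintro ⟨j, hj, rfl⟩
    exact ⟨hj, Sym2.mem_mk_left _ _⟩

/-- The total weight of completing the external configuration `x` inside the gadget of a node
of degree three is `1` or `0` according to the parity of the degree under `x`. -/
lemma sum_gadget_completions {x : Finset (Sym2 V)} (hx : x ⊆ E) {i : V}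
    (hcubic : (E.filter (fun e => i ∈ e)).card = 3) {lam' : Sym2 (V ⊕ V × V) → ℝ}
    (hlam'2 : ∀ j : V, s(i, j) ∈ E → lam' s(Sum.inl i, Sum.inr (i, j)) = 1)
    (hlam'3 : ∀ j k : V, s(i, j) ∈ E → s(i, k) ∈ E → j ≠ k →
      lam' s(Sum.inr (i, j), Sum.inr (i, k)) = 1 / 3) :
    (∑ y ∈ (gadgetEdges7 E i).powerset,
      if ∀ v ∈ gadgetVerts7 E i, degU7 (x.image phi7) v + degU7 y v = 1
        then ∏ e ∈ y, lam' e else 0) = if Even (degU7 x i) then 1 else 0 := by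
  have hN : (univ.filter (fun j => s(i, j) ∈ E)).card = 3 := by
    rw [← degU7_eq_card_neighbors]; exact hcubic
  obtain ⟨a, b, c, hab, hac, hbc, hS⟩ := card_eq_three.1 hN
  have hmem : ∀ j, s(i, j) ∈ E ↔ j = a ∨ j = b ∨ j = c := fun j => by
    simpa using congrArg (fun S => j ∈ S) hS
  have ha : s(i, a) ∈ E := (hmem a).2 (by simp)
  have hb : s(i, b) ∈ E := (hmem b).2 (by simp)
  have hc : s(i, c) ∈ E := (hmem c).2 (by simp)
  let f : Fin 4 → V ⊕ V × V := ![Sum.inl i, Sum.inr (i, a), Sum.inr (i, b), Sum.inr (i, c)]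
  have hf : Function.Injective f := by
    intro u v
    fin_cases u <;> fin_cases v <;>
      simp [f, hab, hac, hbc, hab.symm, hac.symm, hbc.symm]
  have hverts : ∀ v, v ∈ gadgetVerts7 E i ↔ ∃ u, f u = v := by
    intro v
    simp [gadgetVerts7, hS, f, Fin.exists_fin_succ, eq_comm]
  have hedges : gadgetEdges7 E i =
      (univ.filter (fun e : Sym2 (Fin 4) => ¬ e.IsDiag)).image (Sym2.map f) := by
    ext e
    rw [mem_gadgetEdges7]
    simp only [hverts, mem_image, mem_filter, mem_univ, true_and]
    constructor
    · induction e with | _ u v =>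
      rintro ⟨hd, h⟩
      obtain ⟨u, rfl⟩ := h u (Sym2.mem_mk_left _ _)
      obtain ⟨v, rfl⟩ := h _ (Sym2.mem_mk_right _ _)
      exact ⟨s(u, v), fun h => hd (by simp_all), rfl⟩
    · rintro ⟨e, hd, rfl⟩
      induction e with | _ u v =>
      simp only [Sym2.map_mk, Sym2.mk_isDiag_iff, hf.eq_iff] at hd ⊢
      refine ⟨hd, fun w hw => ?_⟩
      rcases Sym2.mem_iff.1 hw with rfl | rfl <;> exact ⟨_, rfl⟩
  have hdeg : degU7 x i = (decide (s(i, a) ∈ x)).toNat + (decide (s(i, b) ∈ x)).toNat +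
      (decide (s(i, c) ∈ x)).toNat := by
    have : univ.filter (fun j => s(i, j) ∈ x) =
        ({a, b, c} : Finset V).filter (fun j => s(i, j) ∈ x) := by
      rw [← hS, filter_filter]
      exact filter_congr fun j _ => ⟨fun h => ⟨hx h, h⟩, fun h => h.2⟩
    rw [degU7_eq_card_neighbors, this, card_filter, sum_insert (by simp [hab, hac]),
      sum_pair hbc]
    simp only [Bool.toNat, Bool.cond_decide, add_assoc]
  have hcond : ∀ z : Finset (Sym2 (Fin 4)),
      (∀ v ∈ gadgetVerts7 E i,
        degU7 (x.image phi7) v + degU7 (z.image (Sym2.map f)) v = 1) ↔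
      ∀ u, (![false, decide (s(i, a) ∈ x), decide (s(i, b) ∈ x),
        decide (s(i, c) ∈ x)] u).toNat + degU7 z u = 1 := by
    intro z
    have hext : ∀ u, degU7 (x.image phi7) (f u) = (![false, decide (s(i, a) ∈ x),
        decide (s(i, b) ∈ x), decide (s(i, c) ∈ x)] u).toNat := by
      intro u
      fin_cases u
      · exact degU7_image_phi7_inl x i
      · exact degU7_image_phi7_inr x i a
      · exact degU7_image_phi7_inr x i b
      · exact degU7_image_phi7_inr x i c
    simp only [hverts, forall_exists_index, forall_apply_eq_imp_iff, degU7_image_map hf, hext]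
  rw [hedges, sum_powerset_image_map hf]
  simp only [hcond]
  rw [← sum_filter, filter_powerset_residualMatchings, hdeg]
  simp only [prod_image fun _ _ _ _ h => Sym2.map.injective hf h]
  exact sum_residualMatchings (fun e => lam' (Sym2.map f e)) _ _ _ (hlam'2 a ha) (hlam'2 b hb)
    (hlam'2 c hc) (hlam'3 a b ha hb hab) (hlam'3 a c ha hc hac) (hlam'3 b c hb hc hbc)

lemma wSubs7_zero (lam : Sym2 V → ℝ) (x : Finset (Sym2 V)) :
    wSubs7 lam (fun _ => 0) x =
      (∏ e ∈ x, lam e) * ∏ i, if Even (degU7 x i) then (1 : ℝ) else 0 := by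
  rw [wSubs7, prod_filter]
  congr 1
  refine prod_congr rfl fun i _ => ?_
  by_cases h : Even (degU7 x i) <;> simp [h, ← Nat.not_even_iff_odd]

lemma disjoint_image_phi7_biUnion {x : Finset (Sym2 V)} (hx : ∀ e ∈ x, ¬ e.IsDiag)
    {y : V → Finset (Sym2 (V ⊕ V × V))} (hy : ∀ i, y i ⊆ gadgetEdges7 E i) :
    Disjoint (x.image phi7) (univ.biUnion y) := by
  rw [disjoint_left]
  intro e he he'
  obtain ⟨e, hex, rfl⟩ := mem_image.1 he
  obtain ⟨i, -, hi⟩ := mem_biUnion.1 he'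
  exact phi7_notMem_gadgetEdges7 (hx e hex) i (hy i hi)

lemma pairwiseDisjoint_gadget {y : V → Finset (Sym2 (V ⊕ V × V))}
    (hy : ∀ i, y i ⊆ gadgetEdges7 E i) : (↑(univ : Finset V) : Set V).PairwiseDisjoint y := by
  intro i _ j _ hij
  rw [Function.onFun, disjoint_left]
  exact fun e hi hj => hij (eq_of_mem_gadgetEdges7 (hy i hi) (hy j hj))

lemma degU7_biUnion_gadget {y : V → Finset (Sym2 (V ⊕ V × V))}
    (hy : ∀ i, y i ⊆ gadgetEdges7 E i) {i : V} {v : V ⊕ V × V} (hv : gadgetOwner v = i) :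
    degU7 (univ.biUnion y) v = degU7 (y i) v := by
  unfold degU7
  congr 1
  ext e
  simp only [mem_filter, mem_biUnion, mem_univ, true_and]
  constructor
  · rintro ⟨⟨j, hj⟩, hve⟩
    rw [gadgetOwner_of_mem_gadgetEdges7 (hy j hj) hve] at hv
    exact ⟨hv ▸ hj, hve⟩
  · rintro ⟨hi, hve⟩
    exact ⟨⟨i, hi⟩, hve⟩

/-- The perfect-matching weight of a configuration factors over the gadgets. -/
lemma wPerMat7_union_biUnion {VS : Finset (V ⊕ V × V)}
    (hVS : VS = univ.biUnion (gadgetVerts7 E)) {x : Finset (Sym2 V)}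
    (hx : ∀ e ∈ x, ¬ e.IsDiag) {y : V → Finset (Sym2 (V ⊕ V × V))}
    (hy : ∀ i, y i ⊆ gadgetEdges7 E i) (lam' : Sym2 (V ⊕ V × V) → ℝ) :
    wPerMat7 VS lam' (x.image phi7 ∪ univ.biUnion y) =
      (∏ e ∈ x, lam' (phi7 e)) * ∏ i,
        if ∀ v ∈ gadgetVerts7 E i, degU7 (x.image phi7) v + degU7 (y i) v = 1
          then ∏ e ∈ y i, lam' e else 0 := by
  have hdisj := disjoint_image_phi7_biUnion hx hy
  have hcond : (∀ v ∈ VS, degU7 (x.image phi7 ∪ univ.biUnion y) v = 1) ↔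
      ∀ i, ∀ v ∈ gadgetVerts7 E i, degU7 (x.image phi7) v + degU7 (y i) v = 1 := by
    subst hVS
    simp only [mem_biUnion, mem_univ, true_and, forall_exists_index, degU7_union hdisj]
    rw [forall_comm]
    refine forall_congr' fun i => forall_congr' fun v => forall_congr' fun hv => ?_
    rw [degU7_biUnion_gadget hy (gadgetOwner_eq hv)]
  rw [wPerMat7, prod_union hdisj, prod_image fun _ _ _ _ h => phi7_injective h,
    prod_biUnion (pairwiseDisjoint_gadget hy)]
  simp only [hcond]
  split_ifs with h
  · rw [prod_congr rfl fun i _ => if_pos (h i)]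
  · obtain ⟨i, hi⟩ := not_forall.1 h
    rw [prod_eq_zero (mem_univ i) (if_neg hi), mul_zero]

/-- The configurations on the new graph restricting to `x` are parametrized by families of
configurations on the gadgets. -/
lemma sum_fiber_eq_sum_piFinset (hE : ∀ e ∈ E, ¬ e.IsDiag) {x : Finset (Sym2 V)} (hx : x ⊆ E)
    (g : Finset (Sym2 (V ⊕ V × V)) → ℝ) :
    (∑ x' ∈ (E.image phi7 ∪ univ.biUnion (gadgetEdges7 E)).powerset.filter
        (fun x' => E.filter (fun e => phi7 e ∈ x') = x), g x') =
      ∑ y ∈ Fintype.piFinset (fun i => (gadgetEdges7 E i).powerset),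
        g (x.image phi7 ∪ univ.biUnion y) := by
  have hrecover : ∀ x' ∈ (E.image phi7 ∪ univ.biUnion (gadgetEdges7 E)).powerset.filter
      (fun x' => E.filter (fun e => phi7 e ∈ x') = x),
      x.image phi7 ∪ univ.biUnion (fun i => x' ∩ gadgetEdges7 E i) = x' := by
    intro x' hx'
    obtain ⟨hsub, rfl⟩ := mem_filter.1 hx'
    rw [mem_powerset] at hsub
    ext e
    simp only [mem_union, mem_image, mem_filter, mem_biUnion, mem_univ, true_and, mem_inter]
    constructor
    · rintro (⟨e, ⟨-, h⟩, rfl⟩ | ⟨i, h, -⟩) <;> exact h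
    · intro h
      have := hsub h
      simp only [mem_union, mem_image, mem_biUnion, mem_univ, true_and] at this
      rcases this with ⟨e, he, rfl⟩ | ⟨i, hi⟩
      · exact Or.inl ⟨e, ⟨he, h⟩, rfl⟩
      · exact Or.inr ⟨i, h, hi⟩
  refine sum_nbij' (fun x' i => x' ∩ gadgetEdges7 E i)
    (fun y => x.image phi7 ∪ univ.biUnion y) ?_ ?_ ?_ ?_ ?_
  · intro x' _
    simp
  · intro y hy
    simp only [Fintype.mem_piFinset, mem_powerset] at hy
    simp only [mem_filter, mem_powerset]
    refine ⟨union_subset_union (image_subset_image hx) (biUnion_mono fun i _ => hy i), ?_⟩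
    ext e
    simp only [mem_filter, mem_union, phi7_injective.mem_finset_image]
    refine ⟨fun ⟨he, h⟩ => h.resolve_right fun h => ?_, fun h => ⟨hx h, Or.inl h⟩⟩
    obtain ⟨i, -, hi⟩ := mem_biUnion.1 h
    exact phi7_notMem_gadgetEdges7 (hE e he) i (hy i hi)
  · exact hrecover
  · intro y hy
    simp only [Fintype.mem_piFinset, mem_powerset] at hy
    funext i
    ext e
    simp only [mem_inter, mem_union, mem_image, mem_biUnion, mem_univ, true_and]
    constructor
    · rintro ⟨⟨e, he, rfl⟩ | ⟨j, hj⟩, hi⟩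
      · exact absurd hi (phi7_notMem_gadgetEdges7 (hE e (hx he)) i)
      · rwa [eq_of_mem_gadgetEdges7 hi (hy j hj)]
    · exact fun h => ⟨Or.inr ⟨i, h⟩, hy i h⟩
  · exact fun x' hx' => congrArg g (hrecover x' hx').symm

end Gadget

/-- Reduction of the zero-field subgraphs world on a cubic graph
to weighted perfect matchings.  Each node `i` of the cubic graph `G = (V,E)`
is replaced by the complete-graph gadget on `A_i`, internal edges
`{d_i,v_{ij}}` get weight `1`, edges `{v_{ij},v_{ik}}` get weight `1/3`,
and `{v_{ij},v_{ji}}` gets weight `λ({i,j})`.  The pushforward of the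
perfect-matching distribution on `G'` under `x' ↦ x' ∘ φ` equals the
subgraphs-world distribution on `G` with parameters `λ` and `μ ≡ 0`. -/
theorem stmt7 {V : Type*} [Fintype V] [DecidableEq V]
    (E : Finset (Sym2 V)) (hE : ∀ e ∈ E, ¬ e.IsDiag)
    (hcubic : ∀ v : V, (E.filter (fun e => v ∈ e)).card = 3)
    (lam : Sym2 V → ℝ) (hlam : ∀ e ∈ E, lam e ∈ Set.Icc (0 : ℝ) 1)
    -- the new edge set
    (E' : Finset (Sym2 (V ⊕ V × V)))
    (hE'def : E' = E.image phi7 ∪ Finset.univ.biUnion (gadgetEdges7 E))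
    -- the new vertex set
    (VS : Finset (V ⊕ V × V))
    (hVS : VS = (Finset.univ : Finset V).image Sum.inl ∪
      ((Finset.univ : Finset (V × V)).filter
        (fun p => s(p.1, p.2) ∈ E)).image Sum.inr)
    -- the new edge weights
    (lam' : Sym2 (V ⊕ V × V) → ℝ)
    (hlam'1 : ∀ e ∈ E, lam' (phi7 e) = lam e)
    (hlam'2 : ∀ i j : V, s(i, j) ∈ E →
      lam' s(Sum.inl i, Sum.inr (i, j)) = 1)
    (hlam'3 : ∀ i j k : V, s(i, j) ∈ E → s(i, k) ∈ E → j ≠ k →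
      lam' s(Sum.inr (i, j), Sum.inr (i, k)) = 1 / 3)
    -- the partition function of the perfect-matching model is positive
    (hZ' : 0 < ∑ y' ∈ E'.powerset, wPerMat7 VS lam' y') :
    ∀ x ∈ E.powerset,
      (∑ x' ∈ E'.powerset.filter
            (fun x' => E.filter (fun e => phi7 e ∈ x') = x),
          wPerMat7 VS lam' x') /
        (∑ y' ∈ E'.powerset, wPerMat7 VS lam' y')
      = wSubs7 lam (fun _ => 0) x /
        (∑ y ∈ E.powerset, wSubs7 lam (fun _ => 0) y) := by
  have hVS' : VS = univ.biUnion (gadgetVerts7 E) := by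
    subst hVS
    ext v
    rcases v with i | ⟨i, j⟩ <;> simp [gadgetVerts7]
  have hfiber : ∀ x ∈ E.powerset, (∑ x' ∈ E'.powerset.filter
      (fun x' => E.filter (fun e => phi7 e ∈ x') = x), wPerMat7 VS lam' x') =
      wSubs7 lam (fun _ => 0) x := by
    intro x hx
    rw [mem_powerset] at hx
    rw [hE'def, sum_fiber_eq_sum_piFinset hE hx, wSubs7_zero,
      ← prod_congr rfl fun e he => hlam'1 e (hx he),
      ← prod_congr rfl fun i _ =>
        sum_gadget_completions hx (hcubic i) (hlam'2 i) (hlam'3 i),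
      prod_univ_sum, mul_sum]
    refine sum_congr rfl fun y hy => ?_
    simp only [Fintype.mem_piFinset, mem_powerset] at hy
    exact wPerMat7_union_biUnion hVS' (fun e he => hE e (hx he)) hy lam'
  have htotal : (∑ y' ∈ E'.powerset, wPerMat7 VS lam' y') =
      ∑ y ∈ E.powerset, wSubs7 lam (fun _ => 0) y := by
    rw [← sum_fiberwise_of_maps_to (t := E.powerset)
      (g := fun x' => E.filter (fun e => phi7 e ∈ x'))
      fun x' _ => mem_powerset.2 (filter_subset _ _)]
    exact sum_congr rfl hfiber
  intro x hx
  rw [hfiber x hx, htotal]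
end

section
/- For all real numbers μ and λ with 0 < μ ≤ 1 and 0 < λ ≤ 3μ^{-2}, the quantity κ = −2 / ln(1 − 2/(√(1+3λ) + 1)) satisfies κ < 3.06·μ^{-1}. -/
/-- The first three terms of the power series of `log ((1 + x) / (1 - x))` bound it from below. -/
theorem two_mul_le_log_one_add_sub_log_one_sub {x : ℝ} (hx0 : 0 ≤ x) (hx1 : x < 1) :
    2 * (x * (1 + x ^ 2 / 3 + x ^ 4 / 5)) ≤ Real.log (1 + x) - Real.log (1 - x) := by
  have h := Real.hasSum_log_sub_log_of_abs_lt_one (x := x) (by rwa [abs_of_nonneg hx0])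
  have h3 := sum_le_hasSum (Finset.range 3) (fun i _ => by positivity) h
  norm_num [Finset.sum_range_succ] at h3
  linarith

theorem one_lt_mul_of_sq_mul_eq_one {t x : ℝ} (ht : 1 ≤ t) (hx : 0 < x)
    (h : x ^ 2 * (1 + 9 * t ^ 2) = 1) :
    1 < 3.06 * t * (x * (1 + x ^ 2 / 3 + x ^ 4 / 5)) := by
  have hu : x ^ 2 ≤ 1 / 10 := by nlinarith [mul_nonneg (sq_nonneg x) (by nlinarith : 0 ≤ t ^ 2 - 1)]
  have hpos : 0 ≤ 3.06 * t * (x * (1 + x ^ 2 / 3 + x ^ 4 / 5)) := by positivity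
  refine (one_lt_sq_iff₀ hpos).1 ?_
  have hsq : (3.06 * t * (x * (1 + x ^ 2 / 3 + x ^ 4 / 5))) ^ 2
      = 1.0404 * (1 - x ^ 2) * (1 + x ^ 2 / 3 + (x ^ 2) ^ 2 / 5) ^ 2 := by
    have h9 : 1 - x ^ 2 = 9 * (x ^ 2 * t ^ 2) := by linarith
    rw [h9]
    ring
  rw [hsq]
  have hu0 : 0 ≤ x ^ 2 := sq_nonneg x
  generalize x ^ 2 = u at hu hu0
  have hlow : 1 + 2 * u / 3 + u ^ 2 / 2 ≤ (1 + u / 3 + u ^ 2 / 5) ^ 2 := by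
    nlinarith [pow_nonneg hu0 2, pow_nonneg hu0 3, pow_nonneg hu0 4]
  have hmul := mul_le_mul_of_nonneg_left hlow (by linarith : 0 ≤ 1.0404 * (1 - u))
  refine lt_of_lt_of_le ?_ hmul
  nlinarith [mul_nonneg hu0 (sub_nonneg.2 hu), mul_nonneg (pow_nonneg hu0 2) (sub_nonneg.2 hu)]

/-- For all reals `μ, λ` with `0 < μ ≤ 1` and `0 < λ ≤ 3μ⁻²`,
the quantity `κ = −2 / ln(1 − 2/(√(1+3λ) + 1))` satisfies `κ < 3.06·μ⁻¹`. -/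
theorem stmt15 (μ lam : ℝ) (hμ0 : 0 < μ) (hμ1 : μ ≤ 1)
    (hlam0 : 0 < lam) (hlam : lam ≤ 3 * (μ ^ 2)⁻¹) :
    -2 / Real.log (1 - 2 / (Real.sqrt (1 + 3 * lam) + 1)) < 3.06 * μ⁻¹ := by
  have ht : 1 ≤ μ⁻¹ := (one_le_inv₀ hμ0).2 hμ1
  rw [← inv_pow] at hlam
  generalize μ⁻¹ = t at ht hlam
  set s := Real.sqrt (1 + 3 * lam)
  set S := Real.sqrt (1 + 9 * t ^ 2) with hS
  have hs1 : 1 < s := Real.lt_sqrt_of_sq_lt (by linarith)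
  have hsS : s ≤ S := Real.sqrt_le_sqrt (by linarith)
  have hS1 : 1 < S := hs1.trans_le hsS
  have hS0 : 0 < S := by linarith
  have hx1 : S⁻¹ < 1 := inv_lt_one_of_one_lt₀ hS1
  have hlog : Real.log (1 - 2 / (s + 1)) ≤ Real.log (1 - S⁻¹) - Real.log (1 + S⁻¹) := by
    rw [← Real.log_div (by linarith) (by positivity)]
    have heq : (1 - S⁻¹) / (1 + S⁻¹) = 1 - 2 / (S + 1) := by
      field_simp
      ring
    rw [heq]
    refine Real.log_le_log ?_ ?_
    · rw [sub_pos, div_lt_one (by linarith)]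
      linarith
    · gcongr
  have hser := two_mul_le_log_one_add_sub_log_one_sub (inv_pos.2 hS0).le hx1
  have hsq : S⁻¹ ^ 2 * (1 + 9 * t ^ 2) = 1 := by
    rw [inv_pow, hS, Real.sq_sqrt (by positivity)]
    exact inv_mul_cancel₀ (by positivity)
  have hone := one_lt_mul_of_sq_mul_eq_one ht (inv_pos.2 hS0) hsq
  have hneg : Real.log (1 - 2 / (s + 1)) < 0 := by
    have : 0 < S⁻¹ * (1 + S⁻¹ ^ 2 / 3 + S⁻¹ ^ 4 / 5) := by positivity
    linarith
  rw [div_lt_iff_of_neg hneg]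
  nlinarith
end
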